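/- Let X₀ be a proper subshift of X = 𝒜^(ℤ^d). Then there exist a continuous function φ : X → ℝ and β_c ∈ (0,1] such that: (i) φ has a freezing phase transition at β_c; (ii) for every β > β_c, ES(βφ) equals the set of measures of maximal entropy on X₀, and also equals ZTA(φ); (iii) for every β < β_c, every μ ∈ ES(βφ) satisfies μ(X₀) = 0. -/

import Mathlib

open MeasureTheory Filter Topology
open scoped ENNReal Classical

namespace Freezing

/-- The configuration space `X = 𝒜^(ℤ^d)`. -/
abbrev Cfg (d : ℕ) (A : Type) : Type := (Fin d → ℤ) → A

section Defs

variable {d : ℕ} {A : Type} [Fintype A] [TopologicalSpace A] [DiscreteTopology A]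
  [MeasurableSpace A] [BorelSpace A]

/-- The shift action: `(σ^n x)_m = x_{n+m}`. -/
def shift (n : Fin d → ℤ) (x : Cfg d A) : Cfg d A := fun m => x (n + m)

/-- Shift-invariance of a measure. -/
def Invariant (μ : Measure (Cfg d A)) : Prop :=
  ∀ n : Fin d → ℤ, Measure.map (shift n) μ = μ

/-- Cylinder set `[w]` for a pattern `w` on `E_n = ([0,n-1] ∩ ℤ)^d`. -/
def cylE (n : ℕ) (w : (Fin d → Fin n) → A) : Set (Cfg d A) :=
  { x | ∀ m : Fin d → Fin n, x (fun i => ((m i : ℕ) : ℤ)) = w m }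

/-- Measure-theoretic entropy `h(μ) = inf_{n ≥ 1} n^{-d} Σ_w (-μ[w] log μ[w])`. -/
noncomputable def entropy (μ : Measure (Cfg d A)) : ℝ :=
  ⨅ n : {n : ℕ // 1 ≤ n},
    ((n.1 : ℝ) ^ d)⁻¹ *
      ∑ w : (Fin d → Fin n.1) → A, Real.negMulLog (μ (cylE n.1 w)).toReal

/-- Pressure `p_φ(β) = sup { h(μ) + β ∫ φ dμ }` over shift-invariant probability measures. -/
noncomputable def pressure (φ : Cfg d A → ℝ) (β : ℝ) : ℝ :=
  sSup { r | ∃ μ : Measure (Cfg d A), IsProbabilityMeasure μ ∧ Invariant μ ∧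
    r = entropy μ + β * ∫ x, φ x ∂μ }

/-- The set of equilibrium states of `βφ`. -/
def ES (φ : Cfg d A → ℝ) (β : ℝ) : Set (Measure (Cfg d A)) :=
  { μ | IsProbabilityMeasure μ ∧ Invariant μ ∧
      entropy μ + β * ∫ x, φ x ∂μ = pressure φ β }

/-- `φ` has a freezing phase transition at `βc`. -/
def FreezingPT (φ : Cfg d A → ℝ) (βc : ℝ) : Prop :=
  (∀ β β' : ℝ, βc < β → βc < β' → ES φ β = ES φ β') ∧
  (∀ β β' : ℝ, β < βc → βc < β' → ES φ β ≠ ES φ β')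

/-- `s_φ = sup { ∫ φ dμ }` over shift-invariant probability measures. -/
noncomputable def sPhi (φ : Cfg d A → ℝ) : ℝ :=
  sSup { r | ∃ μ : Measure (Cfg d A), IsProbabilityMeasure μ ∧ Invariant μ ∧
    r = ∫ x, φ x ∂μ }

/-- The set of maximizing measures of `φ`. -/
def MM (φ : Cfg d A → ℝ) : Set (Measure (Cfg d A)) :=
  { μ | IsProbabilityMeasure μ ∧ Invariant μ ∧ (∫ x, φ x ∂μ) = sPhi φ }

/-- `h_φ = sup { h(η) : η ∈ MM(φ) }`. -/
noncomputable def hPhi (φ : Cfg d A → ℝ) : ℝ :=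
  sSup { r | ∃ μ ∈ MM φ, r = entropy μ }

/-- The zero-temperature accumulation points of `φ`. -/
def ZTA (φ : Cfg d A → ℝ) : Set (Measure (Cfg d A)) :=
  { μ | IsProbabilityMeasure μ ∧ Invariant μ ∧
      ∃ (β : ℕ → ℝ) (μs : ℕ → Measure (Cfg d A)),
        Tendsto β atTop atTop ∧ (∀ k, μs k ∈ ES φ (β k)) ∧
        ∀ f : Cfg d A → ℝ, Continuous f →
          Tendsto (fun k => ∫ x, f x ∂(μs k)) atTop (𝓝 (∫ x, f x ∂μ)) }

/-- A subshift: nonempty, closed, invariant under every shift. -/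
def IsSubshift (X₀ : Set (Cfg d A)) : Prop :=
  X₀.Nonempty ∧ IsClosed X₀ ∧ ∀ n : Fin d → ℤ, ∀ x ∈ X₀, shift n x ∈ X₀

/-- The language `L_{E_n}(X₀)`: patterns on `E_n` appearing at the origin of points of `X₀`. -/
def langE (X₀ : Set (Cfg d A)) (n : ℕ) : Set ((Fin d → Fin n) → A) :=
  { w | ∃ x ∈ X₀, ∀ m : Fin d → Fin n, x (fun i => ((m i : ℕ) : ℤ)) = w m }

/-- Topological entropy `h_top(X₀) = inf_{n ≥ 1} n^{-d} log |L_{E_n}(X₀)|`. -/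
noncomputable def topEnt (X₀ : Set (Cfg d A)) : ℝ :=
  ⨅ n : {n : ℕ // 1 ≤ n}, ((n.1 : ℝ) ^ d)⁻¹ * Real.log ((langE X₀ n.1).ncard)

/-- A measure of maximal entropy on the subshift `X₀`. -/
def IsMME (X₀ : Set (Cfg d A)) (μ : Measure (Cfg d A)) : Prop :=
  IsProbabilityMeasure μ ∧ Invariant μ ∧ μ X₀ = 1 ∧ entropy μ = topEnt X₀

/-- Ergodicity: invariant Borel sets have measure `0` or `1`. -/
def ErgodicInv (μ : Measure (Cfg d A)) : Prop :=
  ∀ s : Set (Cfg d A), MeasurableSet s → (∀ n : Fin d → ℤ, shift n ⁻¹' s = s) →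
    μ s = 0 ∨ μ s = 1

/-- The `n`-th variation `var_n φ`, over pairs agreeing on `B_n = ([-n,n] ∩ ℤ)^d`. -/
noncomputable def varPot (φ : Cfg d A → ℝ) (n : ℕ) : ℝ :=
  sSup { r | ∃ x y : Cfg d A,
    (∀ m : Fin d → ℤ, (∀ i, |m i| ≤ (n : ℤ)) → x m = y m) ∧ r = |φ x - φ y| }

/-- Sup-norm `‖m‖_∞` of a site `m ∈ ℤ^d`. -/
def supNorm (m : Fin d → ℤ) : ℕ := Finset.univ.sup fun i => (m i).natAbs

/-- The metric `dist(x,y) = 2^{-min{‖n‖_∞ : x_n ≠ y_n}}`. -/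
noncomputable def cfgDist (x y : Cfg d A) : ℝ :=
  if x = y then 0
  else (2 : ℝ) ^
    (-((sInf { k : ℕ | ∃ m : Fin d → ℤ, supNorm m = k ∧ x m ≠ y m } : ℕ) : ℤ))

/-- Distance from a point to a subshift. -/
noncomputable def distToSub (X₀ : Set (Cfg d A)) (x : Cfg d A) : ℝ :=
  sInf { r | ∃ y ∈ X₀, r = cfgDist x y }

end Defs


set_option linter.all false

section PartA
variable {d : ℕ} {A : Type} [Fintype A] [TopologicalSpace A] [DiscreteTopology A]
  [MeasurableSpace A] [BorelSpace A]

/-- Pattern of `x` on `E_n`. -/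
def pat (n : ℕ) (x : Cfg d A) : (Fin d → Fin n) → A := fun m => x (fun i => ((m i : ℕ) : ℤ))

/-- site as an integer vector -/
def iv {n : ℕ} (s : Fin d → Fin n) : Fin d → ℤ := fun i => ((s i : ℕ) : ℤ)

/-- The `n`-block entropy. -/
noncomputable def HH (n : ℕ) (μ : Measure (Cfg d A)) : ℝ :=
  ∑ w : (Fin d → Fin n) → A, Real.negMulLog (μ (cylE n w)).toReal

theorem cylE_eq (n : ℕ) (w : (Fin d → Fin n) → A) : cylE n w = pat n ⁻¹' {w} := by
  ext x
  exact ⟨fun h => funext h, fun h m => congrFun h m⟩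

theorem gibbs {ι : Type*} [Fintype ι] (a P : ι → ℝ) (ha : ∀ i, 0 ≤ a i) (hP : ∀ i, 0 ≤ P i)
    (hpos : ∀ i, 0 < a i → 0 < P i) (hs : ∑ i, a i = 1) (C : ℝ) (hC : 0 < C)
    (hPs : ∑ i, P i ≤ C) :
    ∑ i, Real.negMulLog (a i) ≤ ∑ i, a i * (-Real.log (P i)) + Real.log C := by
  have key : ∀ i, Real.negMulLog (a i) ≤
      a i * (-Real.log (P i)) + a i * Real.log C + (P i / C - a i) := by
    intro i
    rcases (ha i).eq_or_lt with h | h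
    · rw [← h]; simp [Real.negMulLog]; exact div_nonneg (hP i) hC.le
    · have hp := hpos i h
      have h1 := Real.log_le_sub_one_of_pos (show 0 < P i / C / a i by positivity)
      rw [Real.log_div (by positivity) h.ne', Real.log_div hp.ne' hC.ne'] at h1
      have h2 := mul_le_mul_of_nonneg_left h1 h.le
      have h3 : a i * (P i / C / a i - 1) = P i / C - a i := by field_simp
      rw [h3] at h2
      unfold Real.negMulLog
      nlinarith
  calc _ ≤ ∑ i, (a i * (-Real.log (P i)) + a i * Real.log C + (P i / C - a i)) :=
        Finset.sum_le_sum fun i _ => key i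
    _ = ∑ i, a i * (-Real.log (P i)) + Real.log C + ((∑ i, P i) / C - 1) := by
        rw [Finset.sum_add_distrib, Finset.sum_add_distrib, Finset.sum_sub_distrib,
          ← Finset.sum_mul, hs, Finset.sum_div, one_mul]
    _ ≤ _ := by
        have : (∑ i, P i) / C ≤ 1 := by rw [div_le_one hC]; exact hPs
        linarith

theorem continuous_pat (n : ℕ) : Continuous (pat n : Cfg d A → _) :=
  continuous_pi fun m => continuous_apply _

theorem measurable_pat (n : ℕ) : Measurable (pat n : Cfg d A → _) :=
  (continuous_pat n).measurable

theorem continuous_shift (n : Fin d → ℤ) : Continuous (shift n : Cfg d A → Cfg d A) :=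
  continuous_pi fun m => continuous_apply _

theorem measurable_shift (n : Fin d → ℤ) : Measurable (shift n : Cfg d A → Cfg d A) :=
  (continuous_shift n).measurable

theorem shift_shift (m n : Fin d → ℤ) (x : Cfg d A) : shift m (shift n x) = shift (n + m) x := by
  funext k; simp [shift, add_assoc]

theorem shift_zero (x : Cfg d A) : shift 0 x = x := by
  funext k; simp [shift]

theorem meas_cyl (n : ℕ) (w : (Fin d → Fin n) → A) : MeasurableSet (cylE n w) := by
  rw [cylE_eq]; exact measurable_pat n (MeasurableSet.singleton w)

theorem cint (μ : Measure (Cfg d A)) [IsFiniteMeasure μ] {f : Cfg d A → ℝ} (hf : Continuous f) :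
    Integrable f μ := hf.integrable_of_hasCompactSupport (HasCompactSupport.of_compactSpace f)

theorem continuous_comp_pat (n : ℕ) (F : ((Fin d → Fin n) → A) → ℝ) :
    Continuous (fun x : Cfg d A => F (pat n x)) :=
  (continuous_of_discreteTopology (f := F)).comp (continuous_pat n)

theorem integral_pat (μ : Measure (Cfg d A)) [IsFiniteMeasure μ] (n : ℕ)
    (F : ((Fin d → Fin n) → A) → ℝ) :
    ∫ x, F (pat n x) ∂μ = ∑ w, (μ (cylE n w)).toReal * F w := by
  rw [← integral_map (f := F) (measurable_pat n).aemeasurable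
    (continuous_of_discreteTopology (f := F)).aestronglyMeasurable]
  rw [integral_fintype (Integrable.of_finite)]
  refine Finset.sum_congr rfl fun w _ => ?_
  rw [Measure.real, Measure.map_apply (measurable_pat n) (MeasurableSet.singleton w), ← cylE_eq]
  rfl

theorem sum_cyl (μ : Measure (Cfg d A)) [IsProbabilityMeasure μ] (n : ℕ) :
    ∑ w : (Fin d → Fin n) → A, (μ (cylE n w)).toReal = 1 := by
  have := integral_pat μ n (fun _ => (1 : ℝ))
  simp at this
  exact this.symm

theorem Invariant.integral {μ : Measure (Cfg d A)} (h : Invariant μ) (n : Fin d → ℤ)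
    {f : Cfg d A → ℝ} (hf : Continuous f) : ∫ x, f (shift n x) ∂μ = ∫ x, f x ∂μ := by
  conv_rhs => rw [← h n]
  rw [integral_map (measurable_shift n).aemeasurable hf.aestronglyMeasurable]

theorem Invariant.measure {μ : Measure (Cfg d A)} (h : Invariant μ) (n : Fin d → ℤ)
    {s : Set (Cfg d A)} (hs : MeasurableSet s) : μ (shift n ⁻¹' s) = μ s := by
  conv_rhs => rw [← h n]
  rw [Measure.map_apply (measurable_shift n) hs]

/-- blocks equivalence for sites -/
def siteEquiv (d r n : ℕ) : (Fin d → Fin r) × (Fin d → Fin n) ≃ (Fin d → Fin (r * n)) :=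
  (Equiv.arrowProdEquivProdArrow (Fin d) (fun _ => Fin r) (fun _ => Fin n)).symm.trans
    (Equiv.arrowCongr (Equiv.refl _) finProdFinEquiv)

theorem siteEquiv_apply (r n : ℕ) (p : (Fin d → Fin r) × (Fin d → Fin n)) (c : Fin d) :
    ((siteEquiv d r n p c : ℕ)) = (p.2 c : ℕ) + n * (p.1 c : ℕ) := by
  simp [siteEquiv, finProdFinEquiv]

/-- block of a pattern -/
def child (r n : ℕ) (w : (Fin d → Fin (r * n)) → A) (i : Fin d → Fin r) : (Fin d → Fin n) → A :=
  fun m => w (siteEquiv d r n (i, m))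

/-- the pattern equivalence -/
def patEquiv (d : ℕ) (A : Type) (r n : ℕ) : ((Fin d → Fin (r * n)) → A) ≃
    ((Fin d → Fin r) → (Fin d → Fin n) → A) :=
  (Equiv.arrowCongr (siteEquiv d r n).symm (Equiv.refl A)).trans
    (Equiv.curry _ _ _)

theorem patEquiv_apply (r n : ℕ) (w : (Fin d → Fin (r * n)) → A) (i : Fin d → Fin r) :
    patEquiv d A r n w i = child r n w i := rfl

theorem child_pat (r n : ℕ) (x : Cfg d A) (i : Fin d → Fin r) :
    child r n (pat (r * n) x) i = pat n (shift ((n : ℤ) • iv i) x) := by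
  funext m
  simp only [child, pat, shift]
  congr 1
  funext c
  rw [siteEquiv_apply]
  simp [iv]; ring

theorem sum_prod_child (r n : ℕ) (f : (Fin d → Fin r) → ((Fin d → Fin n) → A) → ℝ) :
    ∑ w : (Fin d → Fin (r * n)) → A, ∏ i, f i (child r n w i) = ∏ i, ∑ u, f i u := by
  rw [Fintype.prod_sum]
  exact Fintype.sum_equiv (patEquiv d A r n) _ _ (fun w => rfl)

theorem pat_shift_site (r n : ℕ) (i : Fin d → Fin r) (s : Fin d → Fin n) :
    (n : ℤ) • iv i + iv s = iv (siteEquiv d r n (i, s)) := by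
  funext c
  simp [iv, siteEquiv_apply]; ring

theorem sum_sites (r n : ℕ) (f : (Fin d → ℤ) → ℝ) :
    ∑ i : Fin d → Fin r, ∑ s : Fin d → Fin n, f ((n : ℤ) • iv i + iv s) =
      ∑ s : Fin d → Fin (r * n), f (iv s) := by
  rw [← Fintype.sum_prod_type']
  exact Fintype.sum_equiv (siteEquiv d r n) _ _ (fun p => by rw [← pat_shift_site])

theorem HH_nonneg (n : ℕ) (μ : Measure (Cfg d A)) [IsProbabilityMeasure μ] : 0 ≤ HH n μ :=
  Finset.sum_nonneg fun w _ => Real.negMulLog_nonneg ENNReal.toReal_nonneg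
    (by exact measureReal_le_one (μ := μ) (s := cylE n w))

/-- Entropy subadditivity. -/
theorem HH_mul (r n : ℕ) (μ : Measure (Cfg d A)) [IsProbabilityMeasure μ] (hμ : Invariant μ) :
    HH (r * n) μ ≤ (r : ℝ) ^ d * HH n μ := by
  set p : ((Fin d → Fin n) → A) → ℝ := fun u => (μ (cylE n u)).toReal with hp
  have hpp : ∀ u, 0 ≤ p u := fun u => ENNReal.toReal_nonneg
  have hpos : ∀ w : (Fin d → Fin (r * n)) → A, 0 < (μ (cylE (r * n) w)).toReal →
      ∀ i, 0 < p (child r n w i) := by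
    intro w hw i
    refine lt_of_lt_of_le hw ?_
    refine ENNReal.toReal_mono (measure_ne_top _ _) ?_
    rw [← hμ.measure ((n : ℤ) • iv i) (meas_cyl n _)]
    refine measure_mono ?_
    intro x hx
    rw [cylE_eq] at *
    simp only [Set.mem_preimage, Set.mem_singleton_iff] at *
    rw [← child_pat, hx]
  have g := gibbs (fun w : (Fin d → Fin (r * n)) → A => (μ (cylE (r * n) w)).toReal)
    (fun w => ∏ i, p (child r n w i)) (fun _ => ENNReal.toReal_nonneg)
    (fun w => Finset.prod_nonneg fun i _ => hpp _)
    (fun w hw => Finset.prod_pos fun i _ => hpos w hw i) (sum_cyl μ _) 1 one_pos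
    (by
      rw [sum_prod_child r n (fun _ => p)]
      simp [hp, sum_cyl])
  unfold HH
  refine g.trans ?_
  rw [Real.log_one, add_zero]
  have : ∀ w : (Fin d → Fin (r * n)) → A,
      (μ (cylE (r * n) w)).toReal * -Real.log (∏ i, p (child r n w i)) =
      (μ (cylE (r * n) w)).toReal * ∑ i, -Real.log (p (child r n w i)) := by
    intro w
    rcases (ENNReal.toReal_nonneg (a := μ (cylE (r * n) w))).eq_or_lt with h | h
    · rw [← h]; simp
    · rw [Real.log_prod (fun i _ => (hpos w h i).ne'), Finset.sum_neg_distrib]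
  rw [Finset.sum_congr rfl fun w _ => this w]
  rw [← integral_pat μ (r * n) (fun w => ∑ i, -Real.log (p (child r n w i)))]
  simp only [child_pat]
  have hI : ∀ i ∈ (Finset.univ : Finset (Fin d → Fin r)),
      Integrable (fun x => -Real.log (p (pat n (shift ((n : ℤ) • iv i) x)))) μ := fun i _ =>
    cint μ ((continuous_comp_pat n (fun u => -Real.log (p u))).comp (continuous_shift _))
  rw [integral_finsetSum _ hI]
  have h2 : ∀ i : Fin d → Fin r, ∫ x, -Real.log (p (pat n (shift ((n : ℤ) • iv i) x))) ∂μ =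
      HH n μ := by
    intro i
    rw [hμ.integral ((n : ℤ) • iv i) (continuous_comp_pat n (fun u => -Real.log (p u)))]
    rw [integral_pat μ n (fun u => -Real.log (p u))]
    unfold HH Real.negMulLog
    refine Finset.sum_congr rfl fun u _ => by rw [hp]; ring
  rw [Finset.sum_congr rfl fun i _ => h2 i]
  simp [HH]

theorem mem_langE (X₀ : Set (Cfg d A)) (n : ℕ) (w : (Fin d → Fin n) → A) :
    w ∈ langE X₀ n ↔ ∃ x ∈ X₀, pat n x = w := by
  constructor
  · rintro ⟨x, hx, h⟩; exact ⟨x, hx, funext h⟩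
  · rintro ⟨x, hx, h⟩; exact ⟨x, hx, congrFun h⟩

theorem lang_mul (X₀ : Set (Cfg d A)) (hsub : IsSubshift X₀) (r n : ℕ) :
    (langE X₀ (r * n)).ncard ≤ (langE X₀ n).ncard ^ (r ^ d) := by
  have h1 : (langE X₀ (r * n)).ncard ≤
      (Set.univ.pi (fun _ : Fin d → Fin r => langE X₀ n)).ncard := by
    refine Set.ncard_le_ncard_of_injOn (patEquiv d A r n) ?_ ((patEquiv d A r n).injective.injOn)
      (Set.toFinite _)
    intro w hw i _
    rw [mem_langE] at hw
    obtain ⟨x, hx, rfl⟩ := hw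
    rw [patEquiv_apply, child_pat, mem_langE]
    exact ⟨_, hsub.2.2 _ x hx, rfl⟩
  refine h1.trans (le_of_eq ?_)
  have : (Set.univ.pi (fun _ : Fin d → Fin r => langE X₀ n)) =
      ((Fintype.piFinset (fun _ : Fin d → Fin r => (langE X₀ n).toFinset) : Finset _) : Set _) := by
    ext f; simp
  rw [this, Set.ncard_coe_finset, Fintype.card_piFinset]
  simp [Set.ncard_eq_toFinset_card']

theorem lang_pos (X₀ : Set (Cfg d A)) (hsub : IsSubshift X₀) (n : ℕ) :
    0 < (langE X₀ n).ncard := by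
  obtain ⟨x, hx⟩ := hsub.1
  exact (Set.ncard_pos (Set.toFinite _)).2 ⟨pat n x, (mem_langE _ _ _).2 ⟨x, hx, rfl⟩⟩

theorem loglang_mul (X₀ : Set (Cfg d A)) (hsub : IsSubshift X₀) (r n : ℕ) :
    Real.log ((langE X₀ (r * n)).ncard) ≤ (r : ℝ) ^ d * Real.log ((langE X₀ n).ncard) := by
  have h := lang_mul X₀ hsub r n
  have h2 : ((langE X₀ (r * n)).ncard : ℝ) ≤ ((langE X₀ n).ncard : ℝ) ^ (r ^ d) := by
    exact_mod_cast h
  have h3 := Real.log_le_log (by exact_mod_cast lang_pos X₀ hsub (r * n)) h2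
  rw [Real.log_pow] at h3
  push_cast at h3
  exact h3

/-- The scales. -/
def NN (j : ℕ) : ℕ := (j + 1).factorial

theorem NN_pos (j : ℕ) : 0 < NN j := Nat.factorial_pos _

theorem NN_succ (j : ℕ) : NN (j + 1) = (j + 2) * NN j := rfl

theorem le_NN (j : ℕ) : j + 1 ≤ NN j := Nat.self_le_factorial _

theorem dvd_NN {n j : ℕ} (hn : 1 ≤ n) (h : n ≤ j) : n ∣ NN j :=
  Nat.dvd_factorial hn (by omega)

theorem fact_lim (a : ℕ → ℝ) (ha : ∀ n, 0 ≤ a n)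
    (hmul : ∀ r n, a (r * n) ≤ (r : ℝ) ^ d * a n) :
    Tendsto (fun j => ((NN j : ℝ) ^ d)⁻¹ * a (NN j)) atTop
      (𝓝 (⨅ n : {n : ℕ // 1 ≤ n}, ((n.1 : ℝ) ^ d)⁻¹ * a n.1)) := by
  have hb : BddBelow (Set.range fun n : {n : ℕ // 1 ≤ n} => ((n.1 : ℝ) ^ d)⁻¹ * a n.1) :=
    ⟨0, by rintro _ ⟨n, rfl⟩; exact mul_nonneg (by positivity) (ha _)⟩
  haveI : Nonempty {n : ℕ // 1 ≤ n} := ⟨⟨1, le_rfl⟩⟩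
  rw [tendsto_order]
  constructor
  · intro c hc
    refine Eventually.of_forall fun j => lt_of_lt_of_le hc ?_
    exact ciInf_le hb ⟨NN j, NN_pos j⟩
  · intro c hc
    obtain ⟨⟨n, hn⟩, h⟩ := exists_lt_of_ciInf_lt hc
    filter_upwards [eventually_ge_atTop n] with j hj
    obtain ⟨r, hr⟩ := dvd_NN hn hj
    refine lt_of_le_of_lt ?_ h
    have hr0 : 0 < r := by
      rcases Nat.eq_zero_or_pos r with h0 | h0
      · have := NN_pos j; rw [hr, h0] at this; simp at this
      · exact h0
    have hm := hmul r n
    rw [hr, mul_comm n r]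
    have hn' : (0 : ℝ) < n := by exact_mod_cast hn
    have hr' : (0 : ℝ) < r := by exact_mod_cast hr0
    push_cast
    rw [mul_pow, inv_mul_le_iff₀ (by positivity)]
    refine hm.trans (le_of_eq ?_)
    field_simp

theorem entropy_lim (μ : Measure (Cfg d A)) [IsProbabilityMeasure μ] (hμ : Invariant μ) :
    Tendsto (fun j => ((NN j : ℝ) ^ d)⁻¹ * HH (NN j) μ) atTop (𝓝 (entropy μ)) :=
  fact_lim (fun n => HH n μ) (fun n => HH_nonneg n μ) (fun r n => HH_mul r n μ hμ)

theorem topEnt_lim (X₀ : Set (Cfg d A)) (hsub : IsSubshift X₀) :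
    Tendsto (fun j => ((NN j : ℝ) ^ d)⁻¹ * Real.log ((langE X₀ (NN j)).ncard)) atTop
      (𝓝 (topEnt X₀)) :=
  fact_lim (fun n => Real.log ((langE X₀ n).ncard)) (fun n => Real.log_natCast_nonneg _)
    (fun r n => loglang_mul X₀ hsub r n)

theorem topEnt_le (X₀ : Set (Cfg d A)) (n : ℕ) (hn : 1 ≤ n) :
    topEnt X₀ ≤ ((n : ℝ) ^ d)⁻¹ * Real.log ((langE X₀ n).ncard) :=
  ciInf_le (f := fun n : {n : ℕ // 1 ≤ n} => ((n.1 : ℝ) ^ d)⁻¹ * Real.log ((langE X₀ n.1).ncard))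
    ⟨0, by rintro _ ⟨n, rfl⟩; exact mul_nonneg (by positivity) (Real.log_natCast_nonneg _)⟩ ⟨n, hn⟩

theorem topEnt_nonneg (X₀ : Set (Cfg d A)) : 0 ≤ topEnt X₀ :=
  Real.iInf_nonneg fun n => mul_nonneg (by positivity) (Real.log_natCast_nonneg _)

theorem entropy_le (μ : Measure (Cfg d A)) [IsProbabilityMeasure μ] (n : ℕ) (hn : 1 ≤ n) :
    entropy μ ≤ ((n : ℝ) ^ d)⁻¹ * HH n μ :=
  ciInf_le (f := fun n : {n : ℕ // 1 ≤ n} => ((n.1 : ℝ) ^ d)⁻¹ * HH n.1 μ)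
    ⟨0, by rintro _ ⟨n, rfl⟩; exact mul_nonneg (by positivity) (HH_nonneg _ _)⟩ ⟨n, hn⟩

theorem le_entropy (μ : Measure (Cfg d A)) (c : ℝ)
    (h : ∀ n : ℕ, 1 ≤ n → c ≤ ((n : ℝ) ^ d)⁻¹ * HH n μ) : c ≤ entropy μ := by
  haveI : Nonempty {n : ℕ // 1 ≤ n} := ⟨⟨1, le_rfl⟩⟩
  exact le_ciInf fun n => h n.1 n.2

end PartA

section PartB
variable {d : ℕ} {A : Type} [Fintype A] [TopologicalSpace A] [DiscreteTopology A]
  [MeasurableSpace A] [BorelSpace A]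

/-- Some window of size `NN j` around the origin is not legal. -/
def bad (X₀ : Set (Cfg d A)) (j : ℕ) (x : Cfg d A) : Prop :=
  ∃ s : Fin d → Fin (NN j), pat (NN j) (shift (-iv s) x) ∉ langE X₀ (NN j)

/-- The costs. -/
noncomputable def eps (X₀ : Set (Cfg d A)) : ℕ → ℝ
  | 0 => Real.log (Fintype.card ((Fin d → Fin (NN 0)) → A)) + Real.log 2
  | j + 1 => ((NN (j + 1) : ℝ) ^ d)⁻¹ * Real.log ((langE X₀ (NN (j + 1))).ncard) - topEnt X₀ +
      2 * Real.log 2 * ((NN (j + 1) : ℝ) ^ d)⁻¹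

/-- Minus the potential. -/
noncomputable def gg (X₀ : Set (Cfg d A)) (x : Cfg d A) : ℝ :=
  ⨆ j : ℕ, if bad X₀ (j + 1) x then eps X₀ j else 0

theorem NN_tendsto (hd : 1 ≤ d) : Tendsto (fun j => ((NN j : ℝ) ^ d)) atTop atTop := by
  refine (tendsto_pow_atTop (by omega)).comp ?_
  refine tendsto_natCast_atTop_atTop.comp ?_
  exact tendsto_atTop_mono (fun j => (Nat.le_succ j).trans (le_NN j)) tendsto_id

theorem eps_pos (X₀ : Set (Cfg d A)) (j : ℕ) : 0 < eps X₀ j := by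
  have h2 := Real.log_pos (show (1 : ℝ) < 2 by norm_num)
  cases j with
  | zero =>
    have := Real.log_natCast_nonneg (Fintype.card ((Fin d → Fin (NN 0)) → A))
    simp only [eps]; linarith
  | succ j =>
    have := topEnt_le X₀ (NN (j + 1)) (NN_pos _)
    have hN : (0 : ℝ) < NN (j + 1) := by exact_mod_cast NN_pos _
    have : 0 < 2 * Real.log 2 * ((NN (j + 1) : ℝ) ^ d)⁻¹ := by positivity
    simp only [eps]; linarith

theorem eps_lim (hd : 1 ≤ d) (X₀ : Set (Cfg d A)) (hsub : IsSubshift X₀) :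
    Tendsto (eps X₀) atTop (𝓝 0) := by
  rw [← tendsto_add_atTop_iff_nat 1]
  simp only [eps]
  have h1 := (tendsto_add_atTop_iff_nat 1).2 (topEnt_lim X₀ hsub)
  have h2 := (tendsto_add_atTop_iff_nat 1).2 (tendsto_inv_atTop_zero.comp (NN_tendsto hd))
  have := (h1.sub_const (topEnt X₀)).add (h2.const_mul (2 * Real.log 2))
  simpa using this

theorem gg_bdd (hd : 1 ≤ d) (X₀ : Set (Cfg d A)) (hsub : IsSubshift X₀) (x : Cfg d A) :
    BddAbove (Set.range fun j : ℕ => if bad X₀ (j + 1) x then eps X₀ j else 0) := by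
  obtain ⟨c, hc⟩ := (eps_lim hd X₀ hsub).bddAbove_range
  refine ⟨c, ?_⟩
  rintro _ ⟨j, rfl⟩
  have h := hc ⟨j, rfl⟩
  have h0 := eps_pos X₀ j
  dsimp only
  split_ifs
  · exact h
  · linarith

theorem gg_nonneg (X₀ : Set (Cfg d A)) (x : Cfg d A) : 0 ≤ gg X₀ x :=
  Real.iSup_nonneg fun j => by split_ifs; exacts [(eps_pos X₀ j).le, le_rfl]

theorem gg_ge (hd : 1 ≤ d) (X₀ : Set (Cfg d A)) (hsub : IsSubshift X₀) (x : Cfg d A) (j : ℕ)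
    (h : bad X₀ (j + 1) x) : eps X₀ j ≤ gg X₀ x := by
  have := le_ciSup (gg_bdd hd X₀ hsub x) j
  rwa [if_pos h] at this

theorem gg_zero (X₀ : Set (Cfg d A)) (hsub : IsSubshift X₀) (x : Cfg d A) (hx : x ∈ X₀) :
    gg X₀ x = 0 := by
  have : ∀ j, ¬ bad X₀ j x := by
    rintro j ⟨s, hs⟩
    exact hs ((mem_langE _ _ _).2 ⟨_, hsub.2.2 _ x hx, rfl⟩)
  simp [gg, this]

theorem exists_bad (X₀ : Set (Cfg d A)) (hsub : IsSubshift X₀) (x : Cfg d A) (hx : x ∉ X₀) :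
    ∃ j, bad X₀ (j + 1) x := by
  have ho : IsOpen X₀ᶜ := hsub.2.1.isOpen_compl
  rw [isOpen_pi_iff] at ho
  obtain ⟨I, u, hu, hsubs⟩ := ho x hx
  -- radius
  let R : ℕ := I.sup fun m => Finset.univ.sup fun i => (m i).natAbs
  have hR : ∀ m ∈ I, ∀ i, (m i).natAbs ≤ R := fun m hm i =>
    (Finset.le_sup (f := fun i => (m i).natAbs) (Finset.mem_univ i)).trans
      (Finset.le_sup (f := fun m : Fin d → ℤ => Finset.univ.sup fun i => (m i).natAbs) hm)
  have hN : 2 * R + 1 < NN (2 * R + 1) := lt_of_lt_of_le (by omega) (le_NN _)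
  refine ⟨2 * R, fun _ => ⟨R, by omega⟩, ?_⟩
  intro hl
  rw [mem_langE] at hl
  obtain ⟨y, hy, hyx⟩ := hl
  have hy2 := hsub.2.2 (fun _ => (R : ℤ)) y hy
  refine hsubs ?_ hy2
  intro m hm
  have hm' : m ∈ I := hm
  have hb := hR m hm'
  have hm2 : ∀ i, ((R : ℤ) + m i).toNat < NN (2 * R + 1) := by
    intro i; have := hb i; omega
  have := congrFun hyx (fun i => ⟨((R : ℤ) + m i).toNat, hm2 i⟩)
  simp only [pat, shift] at this
  have e1 : (fun i => ((((R : ℤ) + m i).toNat : ℕ) : ℤ)) = (fun _ => (R : ℤ)) + m := by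
    funext i; have := hb i; simp; omega
  have e2 : (-iv (fun _ : Fin d => (⟨R, by omega⟩ : Fin (NN (2 * R + 1)))) +
      fun i => ((((R : ℤ) + m i).toNat : ℕ) : ℤ)) = m := by
    rw [e1]; funext i; simp [iv]
  rw [e2, e1] at this
  show y _ ∈ u m
  rw [this]
  exact (hu m hm').2

theorem gg_pos (hd : 1 ≤ d) (X₀ : Set (Cfg d A)) (hsub : IsSubshift X₀) (x : Cfg d A)
    (hx : x ∉ X₀) : 0 < gg X₀ x := by
  obtain ⟨j, hj⟩ := exists_bad X₀ hsub x hx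
  exact (eps_pos X₀ j).trans_le (gg_ge hd X₀ hsub x j hj)

theorem bad_eventually (X₀ : Set (Cfg d A)) (j : ℕ) (x : Cfg d A) :
    ∀ᶠ y in 𝓝 x, (bad X₀ j y ↔ bad X₀ j x) := by
  have : ∀ᶠ y in 𝓝 x, ∀ s : Fin d → Fin (NN j),
      pat (NN j) (shift (-iv s) y) = pat (NN j) (shift (-iv s) x) := by
    rw [eventually_all]
    intro s
    have hc : Continuous fun y : Cfg d A => pat (NN j) (shift (-iv s) y) :=
      (continuous_pat _).comp (continuous_shift _)
    exact (hc.isOpen_preimage {pat (NN j) (shift (-iv s) x)} (isOpen_discrete _)).mem_nhds rfl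
  filter_upwards [this] with y hy
  simp only [bad, hy]

theorem gg_cont (hd : 1 ≤ d) (X₀ : Set (Cfg d A)) (hsub : IsSubshift X₀) :
    Continuous (gg X₀) := by
  rw [continuous_iff_continuousAt]
  intro x
  rw [ContinuousAt, Metric.tendsto_nhds]
  intro δ hδ
  have he := (eps_lim hd X₀ hsub).eventually (gt_mem_nhds (show (0 : ℝ) < δ / 2 by linarith))
  obtain ⟨J, hJ⟩ := eventually_atTop.1 he
  have hev : ∀ᶠ y in 𝓝 x, ∀ j ∈ Finset.range J, (bad X₀ (j + 1) y ↔ bad X₀ (j + 1) x) :=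
    (Finset.eventually_all _).2 fun j _ => bad_eventually X₀ (j + 1) x
  filter_upwards [hev] with y hy
  have key : ∀ a b : Cfg d A, (∀ j ∈ Finset.range J, (bad X₀ (j + 1) a ↔ bad X₀ (j + 1) b)) →
      gg X₀ a ≤ gg X₀ b + δ / 2 := by
    intro a b hab
    refine ciSup_le fun j => ?_
    have h0 := gg_nonneg X₀ b
    split_ifs with hb
    · by_cases hj : j < J
      · have := gg_ge hd X₀ hsub b j ((hab j (Finset.mem_range.2 hj)).1 hb)
        linarith
      · have := hJ j (by omega)
        linarith
    · linarith
  have h1 := key y x hy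
  have h2 := key x y (fun j hj => (hy j hj).symm)
  rw [Real.dist_eq, abs_lt]
  constructor <;> linarith

/-- The coding weights. -/
noncomputable def PP (X₀ : Set (Cfg d A)) : (j : ℕ) → ((Fin d → Fin (NN j)) → A) → ℝ
  | 0, _ => (Fintype.card ((Fin d → Fin (NN 0)) → A) : ℝ)⁻¹
  | j + 1, w =>
    (if w ∈ langE X₀ (NN (j + 1)) then ((langE X₀ (NN (j + 1))).ncard : ℝ)⁻¹ else 0) / 2 +
      (∏ i : Fin d → Fin (j + 2), PP X₀ j (child (j + 2) (NN j) w i)) / 2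

theorem PP_pos [Nonempty A] (X₀ : Set (Cfg d A)) (j : ℕ) (w : (Fin d → Fin (NN j)) → A) :
    0 < PP X₀ j w := by
  induction j with
  | zero => simp only [PP]; have := Fintype.card_pos (α := ((Fin d → Fin (NN 0)) → A)); positivity
  | succ j ih =>
    simp only [PP]
    have h1 : 0 < ∏ i : Fin d → Fin (j + 2), PP X₀ j (child (j + 2) (NN j) w i) :=
      Finset.prod_pos fun i _ => ih _
    have h2 : (0 : ℝ) ≤ (if w ∈ langE X₀ (NN (j + 1)) then
        ((langE X₀ (NN (j + 1))).ncard : ℝ)⁻¹ else 0) := by split_ifs <;> positivity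
    linarith

theorem sum_lang (X₀ : Set (Cfg d A)) (hsub : IsSubshift X₀) (n : ℕ) :
    ∑ w : (Fin d → Fin n) → A,
      (if w ∈ langE X₀ n then ((langE X₀ n).ncard : ℝ)⁻¹ else 0) = 1 := by
  rw [← Finset.sum_filter, Finset.sum_const, nsmul_eq_mul]
  have h : (Finset.univ.filter fun w => w ∈ langE X₀ n).card = (langE X₀ n).ncard := by
    rw [← Set.ncard_coe_finset]; congr 1; ext w; simp
  rw [h]
  have := lang_pos X₀ hsub n
  field_simp

theorem PP_sum [Nonempty A] (X₀ : Set (Cfg d A)) (hsub : IsSubshift X₀) (j : ℕ) :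
    ∑ w, PP X₀ j w = 1 := by
  induction j with
  | zero =>
    simp only [PP]
    have := Fintype.card_pos (α := ((Fin d → Fin (NN 0)) → A))
    rw [Finset.sum_const, nsmul_eq_mul, Finset.card_univ]; field_simp
  | succ j ih =>
    simp only [PP]
    rw [Finset.sum_add_distrib, ← Finset.sum_div, ← Finset.sum_div, sum_lang X₀ hsub]
    have := sum_prod_child (d := d) (A := A) (j + 2) (NN j) (fun _ => PP X₀ j)
    simp only [ih, Finset.prod_const_one] at this
    have h2 : ∑ w : (Fin d → Fin (NN (j + 1))) → A,
      ∏ i, PP X₀ j (child (j + 2) (NN j) w i) = 1 := this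
    rw [h2]; norm_num

theorem PP_bound [Nonempty A] (hd : 1 ≤ d) (X₀ : Set (Cfg d A)) (hsub : IsSubshift X₀) (j : ℕ)
    (x : Cfg d A) :
    -Real.log (PP X₀ j (pat (NN j) x)) ≤
      ∑ s : Fin d → Fin (NN j), (topEnt X₀ + max (gg X₀ (shift (iv s) x)) (eps X₀ j))
        - Real.log 2 := by
  induction j generalizing x with
  | zero =>
    have hc : Fintype.card (Fin d → Fin (NN 0)) = 1 := by simp [NN]
    have h1 : ∑ s : Fin d → Fin (NN 0), (topEnt X₀ + eps X₀ 0) ≤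
      ∑ s : Fin d → Fin (NN 0), (topEnt X₀ + max (gg X₀ (shift (iv s) x)) (eps X₀ 0)) :=
      Finset.sum_le_sum fun s _ => by gcongr; exact le_max_right _ _
    rw [Finset.sum_const, Finset.card_univ, hc, one_smul] at h1
    have h0 := topEnt_nonneg X₀
    simp only [PP, eps, Real.log_inv] at h1 ⊢
    linarith
  | succ j ih =>
    have h2 := Real.log_pos (show (1 : ℝ) < 2 by norm_num)
    by_cases hl : pat (NN (j + 1)) x ∈ langE X₀ (NN (j + 1))
    · have h1 : ∑ s : Fin d → Fin (NN (j + 1)), (topEnt X₀ + eps X₀ (j + 1)) ≤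
        ∑ s : Fin d → Fin (NN (j + 1)),
          (topEnt X₀ + max (gg X₀ (shift (iv s) x)) (eps X₀ (j + 1))) :=
        Finset.sum_le_sum fun s _ => by gcongr; exact le_max_right _ _
      have hN : (0 : ℝ) < NN (j + 1) := by exact_mod_cast NN_pos _
      have hcard : ∑ s : Fin d → Fin (NN (j + 1)), (topEnt X₀ + eps X₀ (j + 1)) =
          Real.log ((langE X₀ (NN (j + 1))).ncard) + 2 * Real.log 2 := by
        rw [Finset.sum_const, Finset.card_univ]
        simp only [Fintype.card_fun, Fintype.card_fin, nsmul_eq_mul, eps]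
        push_cast
        field_simp
        ring
      have hLpos : (0 : ℝ) < (langE X₀ (NN (j + 1))).ncard := by
        exact_mod_cast lang_pos X₀ hsub _
      have hP : ((langE X₀ (NN (j + 1))).ncard : ℝ)⁻¹ / 2 ≤
          PP X₀ (j + 1) (pat (NN (j + 1)) x) := by
        simp only [PP, if_pos hl]
        have : 0 < ∏ i : Fin d → Fin (j + 2),
          PP X₀ j (child (j + 2) (NN j) (pat (NN (j + 1)) x) i) :=
          Finset.prod_pos fun i _ => PP_pos X₀ j _
        linarith
      have h3 := Real.log_le_log (by positivity) hP
      rw [Real.log_div (by positivity) (by norm_num), Real.log_inv] at h3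
      linarith
    · have hbad : ∀ s : Fin d → Fin (NN (j + 1)), bad X₀ (j + 1) (shift (iv s) x) := by
        intro s
        refine ⟨s, ?_⟩
        rw [shift_shift, add_neg_cancel, shift_zero]
        exact hl
      have hge : ∀ s : Fin d → Fin (NN (j + 1)), eps X₀ j ≤ gg X₀ (shift (iv s) x) :=
        fun s => gg_ge hd X₀ hsub _ j (hbad s)
      have hpr : 0 < ∏ i : Fin d → Fin (j + 2),
          PP X₀ j (child (j + 2) (NN j) (pat (NN (j + 1)) x) i) :=
          Finset.prod_pos fun i _ => PP_pos X₀ j _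
      have hP : PP X₀ (j + 1) (pat (NN (j + 1)) x) = (∏ i : Fin d → Fin (j + 2),
          PP X₀ j (child (j + 2) (NN j) (pat (NN (j + 1)) x) i)) / 2 := by
        simp only [PP, if_neg hl]; ring
      rw [hP, Real.log_div hpr.ne' (by norm_num),
        Real.log_prod (fun i _ => (PP_pos X₀ j _).ne')]
      have e1 : ∀ i : Fin d → Fin (j + 2), child (j + 2) (NN j) (pat (NN (j + 1)) x) i =
        pat (NN j) (shift ((NN j : ℤ) • iv i) x) := fun i => child_pat (j + 2) (NN j) x i
      simp only [e1]
      have h4 : ∑ i : Fin d → Fin (j + 2),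
          -Real.log (PP X₀ j (pat (NN j) (shift ((NN j : ℤ) • iv i) x))) ≤
          ∑ i : Fin d → Fin (j + 2), (∑ s : Fin d → Fin (NN j), (topEnt X₀ +
            max (gg X₀ (shift ((NN j : ℤ) • iv i + iv s) x)) (eps X₀ j)) - Real.log 2) := by
        refine Finset.sum_le_sum fun i _ => ?_
        have := ih (shift ((NN j : ℤ) • iv i) x)
        simpa only [shift_shift] using this
      rw [Finset.sum_sub_distrib, sum_sites (j + 2) (NN j)
        (fun v => topEnt X₀ + max (gg X₀ (shift v x)) (eps X₀ j))] at h4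
      have h5 : ∑ s : Fin d → Fin ((j + 2) * NN j),
            (topEnt X₀ + max (gg X₀ (shift (iv s) x)) (eps X₀ j)) ≤
          ∑ s : Fin d → Fin (NN (j + 1)),
            (topEnt X₀ + max (gg X₀ (shift (iv s) x)) (eps X₀ (j + 1))) := by
        refine Finset.sum_le_sum fun s _ => ?_
        have a : max (gg X₀ (shift (iv s) x)) (eps X₀ j) ≤ gg X₀ (shift (iv s) x) :=
          max_le le_rfl (hge s)
        have b := le_max_left (gg X₀ (shift (iv s) x)) (eps X₀ (j + 1))
        exact add_le_add le_rfl (a.trans b)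
      have h6 : 2 * Real.log 2 ≤ ∑ i : Fin d → Fin (j + 2), Real.log 2 := by
        rw [Finset.sum_const, Finset.card_univ]
        simp only [Fintype.card_fun, Fintype.card_fin, nsmul_eq_mul]
        have : 2 ≤ (j + 2) ^ d := by
          calc 2 ≤ j + 2 := by omega
            _ = (j + 2) ^ 1 := by ring
            _ ≤ (j + 2) ^ d := Nat.pow_le_pow_right (by omega) hd
        have : (2 : ℝ) ≤ (((j + 2) ^ d : ℕ) : ℝ) := by exact_mod_cast this
        exact mul_le_mul_of_nonneg_right this h2.le
      rw [Finset.sum_neg_distrib] at h4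
      linarith

/-- Main entropy bound. -/
theorem core (hd : 1 ≤ d) (X₀ : Set (Cfg d A)) (hsub : IsSubshift X₀) (μ : Measure (Cfg d A))
    [IsProbabilityMeasure μ] (hμ : Invariant μ) :
    entropy μ ≤ topEnt X₀ + ∫ x, gg X₀ x ∂μ := by
  haveI : Nonempty A := ⟨hsub.1.some 0⟩
  have hgc := gg_cont hd X₀ hsub
  have main : ∀ j, entropy μ ≤ topEnt X₀ + ∫ x, gg X₀ x ∂μ + eps X₀ j := by
    intro j
    have hN : (0 : ℝ) < NN j := by exact_mod_cast NN_pos _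
    have h1 := entropy_le μ (NN j) (NN_pos j)
    have g := gibbs (fun w : (Fin d → Fin (NN j)) → A => (μ (cylE (NN j) w)).toReal)
      (PP X₀ j) (fun _ => ENNReal.toReal_nonneg) (fun w => (PP_pos X₀ j w).le)
      (fun w _ => PP_pos X₀ j w) (sum_cyl μ _) 1 one_pos (PP_sum X₀ hsub j).le
    rw [Real.log_one, add_zero, ← integral_pat μ (NN j) (fun w => -Real.log (PP X₀ j w))] at g
    have hi : ∀ s ∈ (Finset.univ : Finset (Fin d → Fin (NN j))),
        Integrable (fun x => topEnt X₀ + gg X₀ (shift (iv s) x) + eps X₀ j) μ := fun s _ =>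
      cint μ ((continuous_const.add (hgc.comp (continuous_shift _))).add continuous_const)
    have h2 : ∫ x, -Real.log (PP X₀ j (pat (NN j) x)) ∂μ ≤
        ∫ x, ∑ s : Fin d → Fin (NN j), (topEnt X₀ + gg X₀ (shift (iv s) x) + eps X₀ j) ∂μ := by
      refine integral_mono (cint μ (continuous_comp_pat (NN j) (fun w => -Real.log (PP X₀ j w)))) (integrable_finsetSum _ hi) ?_
      intro x
      refine (PP_bound hd X₀ hsub j x).trans ?_
      have h2 := Real.log_pos (show (1 : ℝ) < 2 by norm_num)
      refine (sub_le_self _ h2.le).trans (Finset.sum_le_sum fun s _ => ?_)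
      have a := gg_nonneg X₀ (shift (iv s) x)
      have b := (eps_pos X₀ j).le
      have := max_le_add_of_nonneg a b
      linarith
    rw [integral_finsetSum _ hi] at h2
    have h3 : ∀ s : Fin d → Fin (NN j),
        ∫ x, (topEnt X₀ + gg X₀ (shift (iv s) x) + eps X₀ j) ∂μ =
        topEnt X₀ + ∫ x, gg X₀ x ∂μ + eps X₀ j := by
      intro s
      rw [hμ.integral (iv s) (f := fun x => topEnt X₀ + gg X₀ x + eps X₀ j)
        ((continuous_const.add hgc).add continuous_const)]
      have hi1 : Integrable (fun x => topEnt X₀ + gg X₀ x) μ :=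
        cint μ (continuous_const.add hgc)
      rw [integral_add hi1 (integrable_const _),
        integral_add (integrable_const _) (cint μ hgc)]
      simp
    rw [Finset.sum_congr rfl fun s _ => h3 s, Finset.sum_const, Finset.card_univ] at h2
    simp only [Fintype.card_fun, Fintype.card_fin, nsmul_eq_mul] at h2
    push_cast at h2
    refine h1.trans ?_
    rw [inv_mul_le_iff₀ (by positivity)]
    exact g.trans h2
  have := (eps_lim hd X₀ hsub).const_add (topEnt X₀ + ∫ x, gg X₀ x ∂μ)
  rw [add_zero] at this
  exact ge_of_tendsto' this main

end PartB

section PartC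
variable {d : ℕ} {A : Type} [Fintype A] [TopologicalSpace A] [DiscreteTopology A]
  [MeasurableSpace A] [BorelSpace A]

theorem cyl_integral (μ : Measure (Cfg d A)) [IsFiniteMeasure μ] (n : ℕ)
    (u : (Fin d → Fin n) → A) :
    (μ (cylE n u)).toReal = ∫ x, (if pat n x = u then (1 : ℝ) else 0) ∂μ := by
  rw [integral_pat μ n (fun w => if w = u then (1 : ℝ) else 0)]
  simp

theorem HH_tendsto {ι : Type*} {F : Filter ι} {μs : ι → Measure (Cfg d A)}
    {μ : Measure (Cfg d A)} (h1 : ∀ k, IsFiniteMeasure (μs k)) [IsFiniteMeasure μ]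
    (h : ∀ f : Cfg d A → ℝ, Continuous f →
      Tendsto (fun k => ∫ x, f x ∂(μs k)) F (𝓝 (∫ x, f x ∂μ))) (n : ℕ) :
    Tendsto (fun k => HH n (μs k)) F (𝓝 (HH n μ)) := by
  refine tendsto_finsetSum _ fun w _ => ?_
  refine (Real.continuous_negMulLog.tendsto _).comp ?_
  have := h (fun x => if pat n x = w then (1 : ℝ) else 0)
    (continuous_comp_pat n (fun v => if v = w then (1 : ℝ) else 0))
  rw [← cyl_integral] at this
  simpa only [← cyl_integral] using this

/-- Uniform measure on a finite family of points. -/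
noncomputable def avg {κ : Type*} [Fintype κ] (f : κ → Cfg d A) : Measure (Cfg d A) :=
  (Fintype.card κ : ℝ≥0∞)⁻¹ • ∑ k, Measure.dirac (f k)

theorem avg_prob {κ : Type*} [Fintype κ] [Nonempty κ] (f : κ → Cfg d A) :
    IsProbabilityMeasure (avg f) := by
  constructor
  simp only [avg, Measure.smul_apply, Measure.finsetSum_apply, measure_univ, Finset.sum_const,
    Finset.card_univ, nsmul_eq_mul, mul_one, smul_eq_mul]
  refine ENNReal.inv_mul_cancel ?_ (ENNReal.natCast_ne_top _)
  exact_mod_cast Fintype.card_ne_zero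

theorem avg_integral {κ : Type*} [Fintype κ] (f : κ → Cfg d A) {F : Cfg d A → ℝ}
    (hF : Continuous F) : ∫ x, F x ∂(avg f) = (Fintype.card κ : ℝ)⁻¹ * ∑ k, F (f k) := by
  rw [avg, integral_smul_measure, integral_finsetSum_measure (fun k _ => cint _ hF)]
  simp [integral_dirac' F _ hF.stronglyMeasurable]

theorem sum_inj_le {α β : Type*} [Fintype α] [Fintype β] (ι : α → β) (hι : Function.Injective ι)
    (f : β → ℝ) (hf : ∀ b, 0 ≤ f b) : ∑ a, f (ι a) ≤ ∑ b, f b := by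
  rw [← Finset.sum_image (f := f) (s := Finset.univ) (g := ι) (fun a _ b _ h => hι h)]
  exact Finset.sum_le_univ_sum_of_nonneg hf

theorem restrict_sum {α β : Type*} [Fintype α] [Fintype β] [DecidableEq α] [DecidableEq β] (ι : α → β)
    (hι : Function.Injective ι) (F : (α → A) → ℝ) (hF : ∀ v, 0 ≤ F v) :
    ∑ w : β → A, F (fun a => w (ι a)) ≤
      (Fintype.card A : ℝ) ^ (Fintype.card β - Fintype.card α) * ∑ v, F v := by
  have hc : Fintype.card ({b // b ∉ Set.range ι} → A) =
      Fintype.card A ^ (Fintype.card β - Fintype.card α) := by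
    rw [Fintype.card_fun, Fintype.card_subtype_compl]
    congr 2
    exact (Fintype.card_congr (Equiv.ofInjective ι hι)).symm
  let j : (β → A) → (α → A) × ({b // b ∉ Set.range ι} → A) :=
    fun w => (fun a => w (ι a), fun b => w b.1)
  have hj : Function.Injective j := by
    intro w w' h
    funext b
    by_cases hb : b ∈ Set.range ι
    · obtain ⟨a, rfl⟩ := hb
      exact congrFun (congrArg Prod.fst h) a
    · exact congrFun (congrArg Prod.snd h) ⟨b, hb⟩
  have := sum_inj_le j hj (fun p => F p.1) (fun p => hF _)
  refine this.trans (le_of_eq ?_)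
  rw [Fintype.sum_prod_type]
  simp only [Finset.sum_const, Finset.card_univ, hc, nsmul_eq_mul]
  rw [Finset.mul_sum]; push_cast; rfl

theorem le_box (N q : ℕ) (t : Fin d → Fin q) (s : Fin d → Fin (N * q)) (c : Fin d) :
    (t c : ℕ) + s c < (N + 1) * q := by
  have := (t c).2; have := (s c).2
  rw [Nat.add_mul, one_mul]; omega

/-- Translation of windows -/
def win (N q : ℕ) (t : Fin d → Fin q) (s : Fin d → Fin (N * q)) : Fin d → Fin ((N + 1) * q) :=
  fun c => ⟨(t c : ℕ) + s c, le_box N q t s c⟩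

theorem win_inj (N q : ℕ) (t : Fin d → Fin q) : Function.Injective (win N q t) := by
  intro s s' h
  funext c
  have := congrArg Fin.val (congrFun h c)
  simp only [win] at this
  ext; omega

theorem iv_win (N q : ℕ) (t : Fin d → Fin q) (s : Fin d → Fin (N * q)) :
    iv (win N q t s) = iv t + iv s := by
  funext c; simp [iv, win]

theorem pat_win (N q : ℕ) (t : Fin d → Fin q) (x : Cfg d A) :
    pat (N * q) (shift (iv t) x) = fun s => pat ((N + 1) * q) x (win N q t s) := by
  funext s
  show x (iv t + iv s) = x (iv (win N q t s))
  rw [iv_win]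

/-- chosen points -/
noncomputable def pt (X₀ : Set (Cfg d A)) (M : ℕ) (w : {w // w ∈ langE X₀ M}) : Cfg d A :=
  ((mem_langE X₀ M w.1).1 w.2).choose

theorem pt_mem (X₀ : Set (Cfg d A)) (M : ℕ) (w : {w // w ∈ langE X₀ M}) : pt X₀ M w ∈ X₀ :=
  ((mem_langE X₀ M w.1).1 w.2).choose_spec.1

theorem pt_pat (X₀ : Set (Cfg d A)) (M : ℕ) (w : {w // w ∈ langE X₀ M}) :
    pat M (pt X₀ M w) = w.1 :=
  ((mem_langE X₀ M w.1).1 w.2).choose_spec.2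

/-- approximating measures -/
noncomputable def mm (X₀ : Set (Cfg d A)) (M : ℕ) : Measure (Cfg d A) :=
  avg (fun k : {w // w ∈ langE X₀ M} × (Fin d → Fin M) => shift (iv k.2) (pt X₀ M k.1))

theorem card_lang (X₀ : Set (Cfg d A)) (M : ℕ) :
    Fintype.card {w // w ∈ langE X₀ M} = (langE X₀ M).ncard := by
  rw [← Nat.card_eq_fintype_card]; rfl

theorem mm_prob (X₀ : Set (Cfg d A)) (hsub : IsSubshift X₀) (M : ℕ) (hM : 1 ≤ M) :
    IsProbabilityMeasure (mm X₀ M) := by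
  haveI : Nonempty {w // w ∈ langE X₀ M} := by
    obtain ⟨x, hx⟩ := hsub.1
    exact ⟨⟨pat M x, (mem_langE _ _ _).2 ⟨x, hx, rfl⟩⟩⟩
  haveI : Nonempty (Fin d → Fin M) := ⟨fun _ => ⟨0, hM⟩⟩
  exact avg_prob _

theorem mm_integral (X₀ : Set (Cfg d A)) (M : ℕ) {F : Cfg d A → ℝ} (hF : Continuous F) :
    ∫ x, F x ∂(mm X₀ M) = ((langE X₀ M).ncard : ℝ)⁻¹ * ∑ w : {w // w ∈ langE X₀ M},
      ((M : ℝ) ^ d)⁻¹ * ∑ s : Fin d → Fin M, F (shift (iv s) (pt X₀ M w)) := by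
  rw [mm, avg_integral _ hF, Fintype.sum_prod_type, ← Finset.mul_sum, ← mul_assoc]
  congr 1
  rw [Fintype.card_prod, card_lang]
  simp [mul_comm]

theorem mis_bound (X₀ : Set (Cfg d A)) (N q : ℕ) (t : Fin d → Fin q)
    (F : ((Fin d → Fin (N * q)) → A) → ℝ) (hF0 : ∀ v, 0 ≤ F v) (hFs : ∑ v, F v = 1) :
    ∑ w : {w // w ∈ langE X₀ ((N + 1) * q)},
      F (pat (N * q) (shift (iv t) (pt X₀ ((N + 1) * q) w))) ≤
      (Fintype.card A : ℝ) ^ (((N + 1) * q) ^ d - (N * q) ^ d) := by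
  have h1 : ∀ w : {w // w ∈ langE X₀ ((N + 1) * q)},
      F (pat (N * q) (shift (iv t) (pt X₀ ((N + 1) * q) w))) =
      F (fun s => w.1 (win N q t s)) := by
    intro w; rw [pat_win]; congr 1; funext s; exact congrFun (pt_pat X₀ _ w) _
  rw [Finset.sum_congr rfl fun w _ => h1 w]
  have h2 := sum_inj_le (Subtype.val : {w // w ∈ langE X₀ ((N + 1) * q)} → _) Subtype.val_injective
    (fun w : (Fin d → Fin ((N + 1) * q)) → A => F (fun s => w (win N q t s))) (fun w => hF0 _)
  have h3 := restrict_sum (win N q t) (win_inj N q t) F hF0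
  refine h2.trans (h3.trans ?_)
  rw [hFs, mul_one]
  simp

theorem mis (X₀ : Set (Cfg d A)) (hsub : IsSubshift X₀) (N q : ℕ) (hq : 1 ≤ q) :
    (q : ℝ) ^ d * Real.log ((langE X₀ ((N + 1) * q)).ncard) ≤
      (((N + 1) * q : ℕ) : ℝ) ^ d * HH q (mm X₀ ((N + 1) * q)) +
      (q : ℝ) ^ d * (((((N + 1) * q : ℕ) : ℝ) ^ d - ((N * q : ℕ) : ℝ) ^ d) *
        Real.log (Fintype.card A)) := by
  haveI : Nonempty A := ⟨hsub.1.some 0⟩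
  set M := (N + 1) * q with hM
  have hM1 : 1 ≤ M := Nat.mul_pos (by omega) hq
  haveI := mm_prob X₀ hsub M hM1
  set L := (langE X₀ M).ncard with hL
  have hLpos : (0 : ℝ) < L := by exact_mod_cast lang_pos X₀ hsub M
  have hMpos : (0 : ℝ) < M := by exact_mod_cast hM1
  set p : ((Fin d → Fin q) → A) → ℝ := fun u => (mm X₀ M (cylE q u)).toReal with hp
  have hp0 : ∀ u, 0 ≤ p u := fun u => ENNReal.toReal_nonneg
  have hp1 : ∀ u, p u ≤ 1 := fun u => measureReal_le_one (μ := mm X₀ M) (s := cylE q u)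
  have hpos : ∀ (w : {w // w ∈ langE X₀ M}) (s : Fin d → Fin M),
      0 < p (pat q (shift (iv s) (pt X₀ M w))) := by
    intro w s
    rw [hp]; dsimp only
    rw [cyl_integral, mm_integral X₀ M (continuous_comp_pat q
      (fun v => if v = pat q (shift (iv s) (pt X₀ M w)) then (1 : ℝ) else 0))]
    refine mul_pos (by positivity) ?_
    refine lt_of_lt_of_le ?_ (Finset.single_le_sum (fun w' _ => ?_) (Finset.mem_univ w))
    · refine mul_pos (by positivity) ?_
      refine lt_of_lt_of_le ?_ (Finset.single_le_sum (fun s' _ => ?_) (Finset.mem_univ s))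
      · rw [if_pos rfl]; exact one_pos
      · split_ifs <;> norm_num
    · refine mul_nonneg (by positivity) (Finset.sum_nonneg fun s' _ => ?_)
      split_ifs <;> norm_num
  set F : ((Fin d → Fin (N * q)) → A) → ℝ := fun v => ∏ i, p (child N q v i) with hF
  have hF0 : ∀ v, 0 ≤ F v := fun v => Finset.prod_nonneg fun i _ => hp0 _
  have hFs : ∑ v, F v = 1 := by
    rw [hF, sum_prod_child N q (fun _ => p)]
    simp [hp, sum_cyl]
  set C : ℝ := (Fintype.card A : ℝ) ^ (M ^ d - (N * q) ^ d) with hC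
  have hA : (0 : ℝ) < Fintype.card A := by exact_mod_cast Fintype.card_pos
  have hCpos : 0 < C := by positivity
  set G : {w // w ∈ langE X₀ M} → (Fin d → ℤ) → ℝ := fun w v =>
    -Real.log (p (pat q (shift v (pt X₀ M w)))) with hG
  have hG0 : ∀ w v, 0 ≤ G w v := fun w v => by
    rw [hG]; dsimp only; have := Real.log_nonpos (hp0 (pat q (shift v (pt X₀ M w)))) (hp1 _)
    linarith
  have hpos2 : ∀ (w : {w // w ∈ langE X₀ M}) (t : Fin d → Fin q) (i : Fin d → Fin N),
      0 < p (pat q (shift ((q : ℤ) • iv i + iv t) (pt X₀ M w))) := by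
    intro w t i
    have h0 : (q : ℤ) • iv i + iv t =
        iv (win N q t (siteEquiv d N q (i, fun _ => ⟨0, hq⟩))) := by
      rw [iv_win, ← pat_shift_site]
      funext c; simp [iv]; ring
    rw [h0]; exact hpos w _
  -- bound for each offset
  have ht : ∀ t : Fin d → Fin q, Real.log L ≤
      (L : ℝ)⁻¹ * ∑ w, ∑ i : Fin d → Fin N, G w ((q : ℤ) • iv i + iv t) + Real.log C := by
    intro t
    have hFe : ∀ w, F (pat (N * q) (shift (iv t) (pt X₀ M w))) =
        ∏ i : Fin d → Fin N, p (pat q (shift ((q : ℤ) • iv i + iv t) (pt X₀ M w))) := by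
      intro w
      rw [hF]; dsimp only
      refine Finset.prod_congr rfl fun i _ => ?_
      rw [child_pat, shift_shift, add_comm]
    have g := gibbs (fun w : {w // w ∈ langE X₀ M} => (L : ℝ)⁻¹)
      (fun w => F (pat (N * q) (shift (iv t) (pt X₀ M w)))) (fun _ => by positivity)
      (fun w => hF0 _) (fun w _ => by
        rw [hFe]; exact Finset.prod_pos fun i _ => hpos2 w t i)
      (by rw [Finset.sum_const, Finset.card_univ, card_lang, nsmul_eq_mul, ← hL]; field_simp) C hCpos
      (mis_bound X₀ N q t F hF0 hFs)
    have e1 : ∑ w : {w // w ∈ langE X₀ M}, Real.negMulLog ((L : ℝ)⁻¹) = Real.log L := by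
      rw [Finset.sum_const, Finset.card_univ, card_lang, nsmul_eq_mul, Real.negMulLog,
        Real.log_inv]
      rw [← hL]; field_simp
    rw [e1] at g
    refine g.trans (le_of_eq ?_)
    rw [Finset.mul_sum]
    congr 1
    refine Finset.sum_congr rfl fun w _ => ?_
    rw [hFe, Real.log_prod (fun i _ => (hpos2 w t i).ne'), ← Finset.sum_neg_distrib]
  have hsum := Finset.sum_le_sum fun (t : Fin d → Fin q) (_ : t ∈ Finset.univ) => ht t
  rw [Finset.sum_const, Finset.sum_add_distrib, Finset.sum_const, ← Finset.mul_sum,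
    Finset.sum_comm] at hsum
  simp only [Finset.card_univ, Fintype.card_fun, Fintype.card_fin, nsmul_eq_mul] at hsum
  push_cast at hsum
  have h5 : ∑ w, ∑ t : Fin d → Fin q, ∑ i : Fin d → Fin N, G w ((q : ℤ) • iv i + iv t) ≤
      ∑ w, ∑ s : Fin d → Fin M, G w (iv s) := by
    refine Finset.sum_le_sum fun w _ => ?_
    rw [Finset.sum_comm, sum_sites N q (G w)]
    have := sum_inj_le (win N q (fun _ => ⟨0, hq⟩)) (win_inj N q (fun _ : Fin d => ⟨0, hq⟩))
      (fun s => G w (iv s)) (fun s => hG0 _ _)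
    refine le_trans (le_of_eq ?_) this
    refine Finset.sum_congr rfl fun s _ => ?_
    rw [iv_win]; congr 1; funext c; simp [iv]
  have h6 : (M : ℝ) ^ d * HH q (mm X₀ M) = (L : ℝ)⁻¹ * ∑ w, ∑ s : Fin d → Fin M, G w (iv s) := by
    have : HH q (mm X₀ M) = ∫ x, -Real.log (p (pat q x)) ∂(mm X₀ M) := by
      rw [integral_pat _ q (fun u => -Real.log (p u))]
      unfold HH Real.negMulLog
      refine Finset.sum_congr rfl fun u _ => by rw [hp]; ring
    rw [this, mm_integral X₀ M (continuous_comp_pat q (fun u => -Real.log (p u))),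
      ← Finset.mul_sum]
    rw [hG, ← hL]
    field_simp
  have hlogC : Real.log C = ((M : ℝ) ^ d - ((N * q : ℕ) : ℝ) ^ d) * Real.log (Fintype.card A) := by
    rw [hC, Real.log_pow, Nat.cast_sub (Nat.pow_le_pow_left (by rw [hM]; nlinarith) d)]
    push_cast; rfl
  rw [h6, ← hlogC]
  have h7 : (L : ℝ)⁻¹ * ∑ w, ∑ t : Fin d → Fin q, ∑ i : Fin d → Fin N,
      G w ((q : ℤ) • iv i + iv t) ≤ (L : ℝ)⁻¹ * ∑ w, ∑ s : Fin d → Fin M, G w (iv s) :=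
    mul_le_mul_of_nonneg_left h5 (by positivity)
  linarith

theorem mis' (X₀ : Set (Cfg d A)) (hsub : IsSubshift X₀) (M q : ℕ) (hq : 1 ≤ q) (hM : 1 ≤ M)
    (hdvd : q ∣ M) : topEnt X₀ ≤ ((q : ℝ) ^ d)⁻¹ * HH q (mm X₀ M) +
      (1 - (1 - (q : ℝ) * (M : ℝ)⁻¹) ^ d) * Real.log (Fintype.card A) := by
  obtain ⟨r, hr⟩ := hdvd
  have hr0 : r ≠ 0 := by rintro rfl; omega
  obtain ⟨N, rfl⟩ := Nat.exists_eq_succ_of_ne_zero hr0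
  have hMe : M = (N + 1) * q := by rw [hr, mul_comm]
  subst hMe
  have h := mis X₀ hsub N q hq
  have h1 := topEnt_le X₀ ((N + 1) * q) hM
  have hM' : (0 : ℝ) < (((N + 1) * q : ℕ) : ℝ) := by exact_mod_cast hM
  have hq' : (0 : ℝ) < q := by exact_mod_cast hq
  rw [le_inv_mul_iff₀ (by positivity)] at h1
  have e : ((N * q : ℕ) : ℝ) = (((N + 1) * q : ℕ) : ℝ) *
      (1 - (q : ℝ) * ((((N + 1) * q : ℕ) : ℝ))⁻¹) := by
    field_simp; push_cast; ring
  rw [e, mul_pow] at h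
  set m := (((N + 1) * q : ℕ) : ℝ)
  set y := (1 - (q : ℝ) * m⁻¹) ^ d
  have hm : 0 < m ^ d := by positivity
  have hqd : 0 < (q : ℝ) ^ d := by positivity
  have h2 := mul_le_mul_of_nonneg_left h1 hqd.le
  have h3 := h2.trans h
  have h4 : m ^ d * ((q : ℝ) ^ d * topEnt X₀) ≤ m ^ d * (HH q (mm X₀ ((N + 1) * q)) +
      (q : ℝ) ^ d * ((1 - y) * Real.log (Fintype.card A))) := by
    refine le_trans (le_of_eq (by ring)) (h3.trans (le_of_eq (by ring)))
  have h5 := le_of_mul_le_mul_left h4 hm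
  rw [← sub_le_iff_le_add, le_inv_mul_iff₀ hqd]
  linarith

end PartC

section PartD
variable {d : ℕ} {A : Type} [Fintype A] [TopologicalSpace A] [DiscreteTopology A]
  [MeasurableSpace A] [BorelSpace A]

theorem box_sum (M : ℕ) (e : Fin d → ℤ) (G : (Fin d → ℤ) → ℝ) :
    ∑ s : Fin d → Fin M, G (iv s + e) =
      ∑ v ∈ Fintype.piFinset (fun i => Finset.Ico (e i) (M + e i)), G v := by
  refine Finset.sum_nbij (fun s => iv s + e) ?_ ?_ ?_ (fun s _ => rfl)
  · intro s _
    simp only [Fintype.mem_piFinset, Finset.mem_Ico, Pi.add_apply, iv]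
    intro i
    have := (s i).2
    omega
  · intro s _ s' _ h
    funext i
    have := congrFun h i
    simp only [Pi.add_apply, iv] at this
    ext; omega
  · intro v hv
    simp only [Finset.mem_coe, Fintype.mem_piFinset, Finset.mem_Ico] at hv
    refine ⟨fun i => ⟨(v i - e i).toNat, by have := hv i; omega⟩, by simp, ?_⟩
    funext i
    have := hv i
    simp only [Pi.add_apply, iv]
    omega

theorem box_diff (M R : ℕ) (hR : 2 * R ≤ M) (e : Fin d → ℤ) (he : ∀ i, (e i).natAbs ≤ R)
    (G : (Fin d → ℤ) → ℝ) (B : ℝ) (hB : ∀ v, |G v| ≤ B) :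
    |∑ s : Fin d → Fin M, G (iv s + e) -
      ∑ v ∈ Fintype.piFinset (fun _ : Fin d => Finset.Ico (R : ℤ) (M - R)), G v| ≤
      B * ((M : ℝ) ^ d - ((M : ℝ) - 2 * R) ^ d) := by
  rw [box_sum]
  have hsub : Fintype.piFinset (fun _ : Fin d => Finset.Ico (R : ℤ) (M - R)) ⊆
      Fintype.piFinset (fun i => Finset.Ico (e i) (M + e i)) := by
    refine Fintype.piFinset_subset _ _ fun i => ?_
    intro z hz
    rw [Finset.mem_Ico] at *
    have := he i
    omega
  rw [← Finset.sum_sdiff hsub, add_sub_cancel_right]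
  refine (Finset.abs_sum_le_sum_abs _ _).trans ?_
  refine (Finset.sum_le_card_nsmul _ _ B fun v _ => hB v).trans ?_
  rw [nsmul_eq_mul, mul_comm]
  have hB0 : 0 ≤ B := (abs_nonneg _).trans (hB 0)
  refine mul_le_mul_of_nonneg_left (le_of_eq ?_) hB0
  rw [Finset.cast_card_sdiff hsub, Fintype.card_piFinset, Fintype.card_piFinset]
  have e1 : ((M : ℤ) - R - R).toNat = M - 2 * R := by omega
  simp only [Int.card_Ico, add_sub_cancel_right, Int.toNat_natCast, e1, Finset.prod_const,
    Finset.card_univ, Fintype.card_fin]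
  rw [Nat.cast_pow, Nat.cast_pow, Nat.cast_sub hR]
  push_cast; rfl

theorem mm_almost_inv (X₀ : Set (Cfg d A)) (hsub : IsSubshift X₀) (M R : ℕ) (hM : 1 ≤ M)
    (hR : 2 * R ≤ M)
    (e : Fin d → ℤ) (he : ∀ i, (e i).natAbs ≤ R) {f : Cfg d A → ℝ} (hf : Continuous f) (B : ℝ)
    (hB : ∀ x, |f x| ≤ B) :
    |∫ x, f (shift e x) ∂(mm X₀ M) - ∫ x, f x ∂(mm X₀ M)| ≤
      2 * B * (1 - (1 - 2 * R * (M : ℝ)⁻¹) ^ d) := by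
  have hM' : (0 : ℝ) < M := by exact_mod_cast hM
  rw [mm_integral X₀ M (F := fun x => f (shift e x)) (hf.comp (continuous_shift e)), mm_integral X₀ M hf, ← mul_sub,
    ← Finset.sum_sub_distrib]
  have hL : (0 : ℝ) < (langE X₀ M).ncard := by exact_mod_cast lang_pos X₀ hsub M
  rw [abs_mul, abs_of_pos (inv_pos.2 hL), inv_mul_le_iff₀ hL]
  refine (Finset.abs_sum_le_sum_abs _ _).trans ?_
  refine (Finset.sum_le_card_nsmul _ _ (2 * B * (1 - (1 - 2 * R * (M : ℝ)⁻¹) ^ d))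
    fun w _ => ?_).trans (le_of_eq ?_)
  · rw [← mul_sub, abs_mul, abs_of_pos (by positivity), inv_mul_le_iff₀ (by positivity)]
    have h1 := box_diff M R hR e he (fun v => f (shift v (pt X₀ M w))) B (fun v => hB _)
    have h2 := box_diff M R hR (0 : Fin d → ℤ) (fun i => by simp)
      (fun v => f (shift v (pt X₀ M w))) B (fun v => hB _)
    simp only [add_zero] at h2
    simp only [shift_shift]
    have e2 : ((M : ℝ) - 2 * R) ^ d = (M : ℝ) ^ d * (1 - 2 * R * (M : ℝ)⁻¹) ^ d := by
      rw [← mul_pow]; congr 1; field_simp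
    rw [e2] at h1 h2
    rw [abs_le] at *
    constructor <;> nlinarith [h1.1, h1.2, h2.1, h2.2]
  · rw [Finset.card_univ, card_lang, nsmul_eq_mul]

theorem inv_of_integral (μ : Measure (Cfg d A)) [IsFiniteMeasure μ]
    (h : ∀ (e : Fin d → ℤ) (f : Cfg d A → ℝ), Continuous f →
      ∫ x, f (shift e x) ∂μ = ∫ x, f x ∂μ) : Invariant μ := by
  intro e
  haveI : IsFiniteMeasure (Measure.map (shift e) μ) := Measure.isFiniteMeasure_map _ _
  refine ext_of_forall_integral_eq_of_IsFiniteMeasure fun f => ?_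
  rw [integral_map (measurable_shift e).aemeasurable f.continuous.aestronglyMeasurable]
  exact h e f f.continuous

theorem supp_iff (hd : 1 ≤ d) (X₀ : Set (Cfg d A)) (hsub : IsSubshift X₀)
    (μ : Measure (Cfg d A)) [IsProbabilityMeasure μ] :
    μ X₀ = 1 ↔ ∫ x, gg X₀ x ∂μ = 0 := by
  rw [integral_eq_zero_iff_of_nonneg (gg_nonneg X₀) (cint μ (gg_cont hd X₀ hsub))]
  rw [prob_compl_eq_zero_iff hsub.2.1.measurableSet |>.symm]
  rw [EventuallyEq, ae_iff]
  have : {a | ¬ gg X₀ a = (0 : Cfg d A → ℝ) a} = X₀ᶜ := by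
    ext x
    constructor
    · intro h hx; exact h (gg_zero X₀ hsub x hx)
    · intro hx h
      exact (gg_pos hd X₀ hsub x hx).ne' h
  rw [this]

theorem NN_inv_lim (c : ℝ) (d : ℕ) :
    Tendsto (fun k => (1 - (1 - c * ((NN k : ℕ) : ℝ)⁻¹) ^ d)) atTop (𝓝 0) := by
  have h1 : Tendsto (fun k => ((NN k : ℕ) : ℝ)⁻¹) atTop (𝓝 0) := by
    refine tendsto_inv_atTop_zero.comp (tendsto_natCast_atTop_atTop.comp ?_)
    exact tendsto_atTop_mono (fun j => (Nat.le_succ j).trans (le_NN j)) tendsto_id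
  have := (((h1.const_mul c).const_sub 1).pow d).const_sub 1
  simpa using this

/-- Existence half of the variational principle. -/
theorem exists_mme (hd : 1 ≤ d) (X₀ : Set (Cfg d A)) (hsub : IsSubshift X₀) :
    ∃ μ, IsMME X₀ μ := by
  let P : ℕ → ProbabilityMeasure (Cfg d A) := fun k =>
    ⟨mm X₀ (NN k), mm_prob X₀ hsub (NN k) (NN_pos k)⟩
  let U : Ultrafilter ℕ := hyperfilter ℕ
  have hU : (U : Filter ℕ) ≤ atTop := by rw [← Nat.cofinite_eq_atTop]; exact hyperfilter_le_cofinite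
  obtain ⟨Q, -, hQ⟩ := (isCompact_univ (X := ProbabilityMeasure (Cfg d A))).ultrafilter_le_nhds
    (U.map P) (by simp)
  have hT : Tendsto P U (𝓝 Q) := hQ
  rw [ProbabilityMeasure.tendsto_iff_forall_integral_tendsto] at hT
  let μ : Measure (Cfg d A) := Q
  haveI hμp : IsProbabilityMeasure μ := Q.2
  have hconv : ∀ f : Cfg d A → ℝ, Continuous f →
      Tendsto (fun k => ∫ x, f x ∂(mm X₀ (NN k))) U (𝓝 (∫ x, f x ∂μ)) := by
    intro f hf
    exact hT (BoundedContinuousFunction.mkOfCompact ⟨f, hf⟩)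
  have hinv : Invariant μ := by
    refine inv_of_integral μ fun e f hf => ?_
    obtain ⟨B, hB⟩ : ∃ B, ∀ x, |f x| ≤ B := by
      obtain ⟨B, hB⟩ := isCompact_univ.exists_bound_of_continuousOn hf.continuousOn
      exact ⟨B, fun x => hB x trivial⟩
    let R : ℕ := Finset.univ.sup fun i => (e i).natAbs
    have hR : ∀ i, (e i).natAbs ≤ R := fun i =>
      Finset.le_sup (f := fun i => (e i).natAbs) (Finset.mem_univ i)
    have h1 := ((hconv _ (hf.comp (continuous_shift e))).sub (hconv f hf)).abs
    have h2 := ((NN_inv_lim (2 * R) d).const_mul (2 * B)).mono_left hU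
    rw [mul_zero] at h2
    have h3 := le_of_tendsto_of_tendsto h1 h2 (by
      refine Filter.Eventually.filter_mono hU ?_
      filter_upwards [eventually_ge_atTop (2 * R)] with k hk
      exact mm_almost_inv X₀ hsub (NN k) R (NN_pos k) (by have := le_NN k; omega) e hR hf B hB)
    have h4 := abs_nonpos_iff.1 h3
    exact sub_eq_zero.1 h4
  have hsupp : μ X₀ = 1 := by
    rw [supp_iff hd X₀ hsub]
    have h1 := hconv _ (gg_cont hd X₀ hsub)
    have h2 : ∀ k, ∫ x, gg X₀ x ∂(mm X₀ (NN k)) = 0 := by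
      intro k
      rw [mm_integral X₀ _ (gg_cont hd X₀ hsub)]
      have : ∀ w s, gg X₀ (shift (iv s) (pt X₀ (NN k) w)) = 0 := fun w (s : Fin d → Fin (NN k)) =>
        gg_zero X₀ hsub _ (hsub.2.2 _ _ (pt_mem _ _ _))
      simp [this]
    simp only [h2] at h1
    exact tendsto_nhds_unique h1 tendsto_const_nhds
  refine ⟨μ, hμp, hinv, hsupp, le_antisymm ?_ ?_⟩
  · have := core hd X₀ hsub μ hinv
    rwa [(supp_iff hd X₀ hsub μ).1 hsupp, add_zero] at this
  · refine le_entropy μ _ fun q hq => ?_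
    have h1 := HH_tendsto (F := (U : Filter ℕ)) (fun k => by
      haveI := mm_prob X₀ hsub (NN k) (NN_pos k); infer_instance) hconv q
    have h2 := ((NN_inv_lim q d).mul_const (Real.log (Fintype.card A))).mono_left hU
    have h3 := (h1.const_mul ((q : ℝ) ^ d)⁻¹).add h2
    rw [zero_mul, add_zero] at h3
    refine ge_of_tendsto h3 (Filter.Eventually.filter_mono hU ?_)
    filter_upwards [eventually_ge_atTop q] with k hk
    exact mis' X₀ hsub (NN k) q hq (NN_pos k) (dvd_NN hq hk)

end PartD

section PartE
variable {d : ℕ} {A : Type} [Fintype A] [TopologicalSpace A] [DiscreteTopology A]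
  [MeasurableSpace A] [BorelSpace A]

theorem sub_inv (X₀ : Set (Cfg d A)) (hsub : IsSubshift X₀) (n : Fin d → ℤ) :
    shift n ⁻¹' X₀ = X₀ := by
  ext x
  constructor
  · intro h
    have := hsub.2.2 (-n) _ h
    rw [shift_shift] at this
    simpa [shift_zero] using this
  · intro h; exact hsub.2.2 n x h

theorem cond_inv (X₀ : Set (Cfg d A)) (hsub : IsSubshift X₀) (μ : Measure (Cfg d A))
    (hμ : Invariant μ) : Invariant (ProbabilityTheory.cond μ X₀ᶜ) := by
  intro n
  have hm : MeasurableSet X₀ᶜ := hsub.2.1.measurableSet.compl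
  ext s hs
  rw [Measure.map_apply (measurable_shift n) hs, ProbabilityTheory.cond_apply hm,
    ProbabilityTheory.cond_apply hm]
  congr 1
  have : X₀ᶜ ∩ shift n ⁻¹' s = shift n ⁻¹' (X₀ᶜ ∩ s) := by
    rw [Set.preimage_inter, Set.preimage_compl, sub_inv X₀ hsub]
  rw [this, hμ.measure n (hm.inter hs)]

theorem HH_split (X₀ : Set (Cfg d A)) (hsub : IsSubshift X₀) (μ : Measure (Cfg d A))
    [IsProbabilityMeasure μ] (hb : μ X₀ᶜ ≠ 0) (n : ℕ) :
    HH n μ ≤ Real.log 2 + μ.real X₀ * Real.log ((langE X₀ n).ncard) +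
      μ.real X₀ᶜ * HH n (ProbabilityTheory.cond μ X₀ᶜ) := by
  have hm : MeasurableSet X₀ := hsub.2.1.measurableSet
  haveI : IsProbabilityMeasure (ProbabilityTheory.cond μ X₀ᶜ) :=
    ProbabilityTheory.cond_isProbabilityMeasure hb
  have hL : (0 : ℝ) < (langE X₀ n).ncard := by exact_mod_cast lang_pos X₀ hsub n
  obtain ⟨L, hLe⟩ : ∃ L : ℝ, L = (langE X₀ n).ncard := ⟨_, rfl⟩
  obtain ⟨q, hq⟩ : ∃ q : ((Fin d → Fin n) → A) → ℝ,
    q = fun w => (ProbabilityTheory.cond μ X₀ᶜ (cylE n w)).toReal := ⟨_, rfl⟩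
  obtain ⟨m0, hm0⟩ : ∃ q : ((Fin d → Fin n) → A) → ℝ,
    q = fun w => μ.real (cylE n w ∩ X₀) := ⟨_, rfl⟩
  obtain ⟨b, hbe⟩ : ∃ b, b = μ.real X₀ᶜ := ⟨_, rfl⟩
  obtain ⟨a, hae⟩ : ∃ a, a = μ.real X₀ := ⟨_, rfl⟩
  have hab : a + b = 1 := by rw [hae, hbe, probReal_compl_eq_one_sub hm]; ring
  have hb0 : 0 < b := by
    rw [hbe]; exact ENNReal.toReal_pos hb (measure_ne_top _ _)
  have hdec : ∀ w, (μ (cylE n w)).toReal = m0 w + b * q w := by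
    intro w
    have h1 := measureReal_inter_add_diff (μ := μ) (s := cylE n w) hm
    have h2 : b * q w = μ.real (cylE n w \ X₀) := by
      rw [hq, hbe]; dsimp only
      rw [ProbabilityTheory.cond_apply hm.compl, ENNReal.toReal_mul, ENNReal.toReal_inv,
        Set.diff_eq, Set.inter_comm]
      have : (μ X₀ᶜ).toReal ≠ 0 := by
        rw [hbe] at hb0; exact hb0.ne'
      unfold Measure.real
      field_simp
    rw [h2, hm0]; exact h1.symm
  have hm0n : ∀ w, 0 ≤ m0 w := fun w => by rw [hm0]; exact measureReal_nonneg
  have hqn : ∀ w, 0 ≤ q w := fun w => by rw [hq]; exact ENNReal.toReal_nonneg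
  have hqs : ∑ w, q w = 1 := by rw [hq]; exact sum_cyl _ n
  have hms : ∑ w, m0 w = a := by
    have h1 : ∑ w, (μ (cylE n w)).toReal = 1 := sum_cyl μ n
    simp only [hdec, Finset.sum_add_distrib, ← Finset.mul_sum, hqs] at h1
    linarith
  have hmL : ∀ w, 0 < m0 w → w ∈ langE X₀ n := by
    intro w hw
    by_contra hc
    have : cylE n w ∩ X₀ = ∅ := by
      ext x
      simp only [Set.mem_inter_iff, Set.mem_empty_iff_false, iff_false]
      rintro ⟨h1, h2⟩
      exact hc ⟨x, h2, h1⟩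
    rw [hm0] at hw; simp [this] at hw
  obtain ⟨u, hu⟩ : ∃ u : ((Fin d → Fin n) → A) → ℝ,
    u = fun w => if w ∈ langE X₀ n then L⁻¹ else 0 := ⟨_, rfl⟩
  have hLp : 0 < L := by rw [hLe]; exact hL
  have hus : ∑ w, u w = 1 := by rw [hu, hLe]; exact sum_lang X₀ hsub n
  have hun : ∀ w, 0 ≤ u w := fun w => by rw [hu]; dsimp only; split_ifs <;> positivity
  have humL : ∀ w, 0 < m0 w → u w = L⁻¹ := fun w hw => by
    rw [hu]; exact if_pos (hmL w hw)
  have g := gibbs (fun w => (μ (cylE n w)).toReal) (fun w => (u w + q w) / 2)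
    (fun w => ENNReal.toReal_nonneg) (fun w => by have := hun w; have := hqn w; positivity)
    (fun w hw => by
      rw [hdec] at hw
      rcases (hm0n w).lt_or_eq with h | h
      · have h1 := humL w h
        have h2 := hqn w
        have : 0 < L⁻¹ := inv_pos.2 hLp
        linarith
      · rw [← h, zero_add] at hw
        have := pos_of_mul_pos_right hw hb0.le
        have := hun w
        linarith) (sum_cyl μ n) 1 one_pos
    (by rw [← Finset.sum_div, Finset.sum_add_distrib, hus, hqs]; norm_num)
  rw [Real.log_one, add_zero] at g
  refine g.trans ?_
  have key : ∀ w, (μ (cylE n w)).toReal * (-Real.log ((u w + q w) / 2)) ≤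
      m0 w * (Real.log 2 + Real.log L) + b * (q w * Real.log 2 + Real.negMulLog (q w)) := by
    intro w
    rw [hdec, add_mul]
    refine add_le_add ?_ ?_
    · rcases (hm0n w).lt_or_eq with h | h
      · refine mul_le_mul_of_nonneg_left ?_ h.le
        have h1 : Real.log (L⁻¹ / 2) ≤ Real.log ((u w + q w) / 2) := by
          refine Real.log_le_log (by positivity) ?_
          rw [humL w h]; have := hqn w; linarith
        rw [Real.log_div (by positivity) (by norm_num), Real.log_inv] at h1
        linarith
      · simp [← h]
    · rw [mul_assoc]
      refine mul_le_mul_of_nonneg_left ?_ hb0.le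
      rcases (hqn w).lt_or_eq with h | h
      · have h1 : Real.log (q w / 2) ≤ Real.log ((u w + q w) / 2) := by
          refine Real.log_le_log (by positivity) ?_
          have := hun w; linarith
        rw [Real.log_div (by positivity) (by norm_num)] at h1
        unfold Real.negMulLog
        nlinarith
      · simp [← h]
  refine (Finset.sum_le_sum fun w _ => key w).trans (le_of_eq ?_)
  rw [Finset.sum_add_distrib, ← Finset.sum_mul, ← Finset.mul_sum, Finset.sum_add_distrib,
    ← Finset.sum_mul, hms, hqs, ← hae, ← hbe, ← hLe]
  have : HH n (ProbabilityTheory.cond μ X₀ᶜ) = ∑ w, Real.negMulLog (q w) := by rw [hq]; rfl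
  rw [this]
  have : Real.log 2 = (a + b) * Real.log 2 := by rw [hab, one_mul]
  linear_combination -this

theorem entropy_split (hd : 1 ≤ d) (X₀ : Set (Cfg d A)) (hsub : IsSubshift X₀)
    (μ : Measure (Cfg d A)) [IsProbabilityMeasure μ] (hμ : Invariant μ) (hb : μ X₀ᶜ ≠ 0) :
    entropy μ ≤ μ.real X₀ * topEnt X₀ +
      μ.real X₀ᶜ * entropy (ProbabilityTheory.cond μ X₀ᶜ) := by
  haveI : IsProbabilityMeasure (ProbabilityTheory.cond μ X₀ᶜ) :=
    ProbabilityTheory.cond_isProbabilityMeasure hb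
  have t1 := entropy_lim μ hμ
  have t2 := (topEnt_lim X₀ hsub).const_mul (μ.real X₀)
  have t3 := (entropy_lim _ (cond_inv X₀ hsub μ hμ)).const_mul (μ.real X₀ᶜ)
  have t4 := (tendsto_inv_atTop_zero.comp (NN_tendsto hd)).const_mul (Real.log 2)
  have t5 := (t4.add t2).add t3
  rw [mul_zero, zero_add] at t5
  refine le_of_tendsto_of_tendsto' t1 t5 fun j => ?_
  have h := HH_split X₀ hsub μ hb (NN j)
  have hp : (0 : ℝ) ≤ ((NN j : ℝ) ^ d)⁻¹ := by positivity
  have h2 := mul_le_mul_of_nonneg_left h hp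
  refine h2.trans (le_of_eq ?_)
  simp only [Function.comp_apply]
  ring

theorem integral_split (hd : 1 ≤ d) (X₀ : Set (Cfg d A)) (hsub : IsSubshift X₀)
    (μ : Measure (Cfg d A)) [IsProbabilityMeasure μ] (hb : μ X₀ᶜ ≠ 0) :
    ∫ x, gg X₀ x ∂μ = μ.real X₀ᶜ * ∫ x, gg X₀ x ∂(ProbabilityTheory.cond μ X₀ᶜ) := by
  have hm : MeasurableSet X₀ := hsub.2.1.measurableSet
  rw [ProbabilityTheory.cond, integral_smul_measure, ENNReal.toReal_inv, smul_eq_mul]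
  rw [← integral_add_compl hm (cint μ (gg_cont hd X₀ hsub)),
    setIntegral_eq_zero_of_forall_eq_zero (fun x hx => gg_zero X₀ hsub x hx), zero_add]
  have : (μ X₀ᶜ).toReal ≠ 0 := (ENNReal.toReal_pos hb (measure_ne_top _ _)).ne'
  unfold Measure.real
  field_simp

theorem univ_sub [Nonempty A] : IsSubshift (Set.univ : Set (Cfg d A)) :=
  ⟨Set.univ_nonempty, isClosed_univ, fun _ _ _ => trivial⟩

theorem lang_univ [Nonempty A] (n : ℕ) : langE (Set.univ : Set (Cfg d A)) n = Set.univ := by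
  refine Set.eq_univ_of_forall fun w => ?_
  rw [mem_langE]
  have hinj : Function.Injective (iv : (Fin d → Fin n) → (Fin d → ℤ)) := by
    intro s s' h
    funext i
    have := congrFun h i
    simp only [iv] at this
    ext; omega
  refine ⟨fun m => if h : ∃ s : Fin d → Fin n, iv s = m then w h.choose
    else Classical.arbitrary A, trivial, ?_⟩
  funext s
  have h : ∃ s' : Fin d → Fin n, iv s' = iv s := ⟨s, rfl⟩
  show (if h : ∃ s' : Fin d → Fin n, iv s' = iv s then w h.choose
    else Classical.arbitrary A) = w s
  rw [dif_pos h, hinj h.choose_spec]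

theorem topEnt_univ [Nonempty A] :
    Real.log (Fintype.card A) ≤ topEnt (Set.univ : Set (Cfg d A)) := by
  haveI : Nonempty {n : ℕ // 1 ≤ n} := ⟨⟨1, le_rfl⟩⟩
  refine le_ciInf fun n => ?_
  rw [lang_univ, Set.ncard_univ, Nat.card_eq_fintype_card, Fintype.card_fun, Fintype.card_fun,
    Fintype.card_fin, Fintype.card_fin]
  have : (0 : ℝ) < n.1 := by exact_mod_cast n.2
  push_cast
  rw [Real.log_pow]
  push_cast
  rw [← mul_assoc, inv_mul_cancel₀ (by positivity), one_mul]

theorem topEnt_lt (X₀ : Set (Cfg d A)) (hsub : IsSubshift X₀) (hp : X₀ ≠ Set.univ) :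
    topEnt X₀ < Real.log (Fintype.card A) := by
  obtain ⟨x, hx⟩ := (Set.ne_univ_iff_exists_notMem X₀).1 hp
  obtain ⟨n, hn, w, hw⟩ : ∃ n, 1 ≤ n ∧ ∃ w, w ∉ langE X₀ n := by
    obtain ⟨j, s, hj⟩ := exists_bad X₀ hsub x hx
    exact ⟨_, NN_pos (j + 1), _, hj⟩
  refine (topEnt_le X₀ n hn).trans_lt ?_
  have hn' : (0 : ℝ) < n := by exact_mod_cast hn
  rw [inv_mul_lt_iff₀ (by positivity)]
  have h1 : (langE X₀ n).ncard < Fintype.card A ^ (n ^ d) := by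
    have h2 : (langE X₀ n).ncard < (Set.univ : Set ((Fin d → Fin n) → A)).ncard := by
      refine Set.ncard_lt_ncard ?_
      rw [Set.ssubset_univ_iff]
      intro h; exact hw (h ▸ trivial)
    rwa [Set.ncard_univ, Nat.card_eq_fintype_card, Fintype.card_fun, Fintype.card_fun,
      Fintype.card_fin, Fintype.card_fin] at h2
  have h3 : ((langE X₀ n).ncard : ℝ) < (Fintype.card A : ℝ) ^ (n ^ d) := by exact_mod_cast h1
  have h4 := Real.log_lt_log (by exact_mod_cast lang_pos X₀ hsub n) h3
  rw [Real.log_pow] at h4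
  push_cast at h4
  exact h4

end PartE

/-- **Theorem A.** For any proper subshift `X₀` of `X = 𝒜^(ℤ^d)` there exist a
continuous potential `φ` and `β_c ∈ (0,1]` such that `φ` has a freezing phase transition at
`β_c`; for `β > β_c`, `ES(βφ)` is the set of measures of maximal entropy on `X₀` and coincides
with `ZTA(φ)`; and for `β < β_c`, `μ(X₀) = 0` for all `μ ∈ ES(βφ)`. -/
theorem statement0 (d : ℕ) (hd : 1 ≤ d) (A : Type) [Fintype A] [TopologicalSpace A]
    [DiscreteTopology A] [MeasurableSpace A] [BorelSpace A]
    (X₀ : Set (Cfg d A)) (hsub : IsSubshift X₀) (hproper : X₀ ≠ Set.univ) :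
    ∃ (φ : Cfg d A → ℝ) (βc : ℝ), Continuous φ ∧ 0 < βc ∧ βc ≤ 1 ∧
      FreezingPT φ βc ∧
      (∀ β : ℝ, βc < β → ES φ β = { μ | IsMME X₀ μ } ∧ ES φ β = ZTA φ) ∧
      (∀ β : ℝ, β < βc → ∀ μ ∈ ES φ β, μ X₀ = 0) := by
  haveI : Nonempty A := ⟨hsub.1.some 0⟩
  have hgc := gg_cont hd X₀ hsub
  obtain ⟨h, hh⟩ : ∃ h, h = topEnt X₀ := ⟨_, rfl⟩
  obtain ⟨φ, hφ⟩ : ∃ φ : Cfg d A → ℝ, φ = fun x => -gg X₀ x := ⟨_, rfl⟩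
  have hφc : Continuous φ := by rw [hφ]; exact hgc.neg
  have hφi : ∀ μ : Measure (Cfg d A), ∫ x, φ x ∂μ = -∫ x, gg X₀ x ∂μ := fun μ => by
    rw [hφ]; exact integral_neg _
  have hg0 : ∀ μ : Measure (Cfg d A), 0 ≤ ∫ x, gg X₀ x ∂μ := fun μ =>
    integral_nonneg (gg_nonneg X₀)
  -- bound on entropy
  have hent : ∀ μ : Measure (Cfg d A), IsProbabilityMeasure μ → Invariant μ →
      entropy μ ≤ topEnt (Set.univ : Set (Cfg d A)) := by
    intro μ hp hi
    have h1 := core hd Set.univ univ_sub μ hi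
    have h2 := (supp_iff hd Set.univ univ_sub μ).1 measure_univ
    rw [h2, add_zero] at h1; exact h1
  obtain ⟨B, hB⟩ : ∃ B, ∀ x, ‖gg X₀ x‖ ≤ B := by
    obtain ⟨B, hB⟩ := isCompact_univ.exists_bound_of_continuousOn hgc.continuousOn
    exact ⟨B, fun x => hB x trivial⟩
  have hgB : ∀ μ : Measure (Cfg d A), IsProbabilityMeasure μ → ∫ x, gg X₀ x ∂μ ≤ B := by
    intro μ hp
    have h1 := norm_integral_le_of_norm_le_const (μ := μ) (ae_of_all _ hB)
    rw [probReal_univ, mul_one] at h1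
    exact (Real.le_norm_self _).trans h1
  have hbdd : ∀ β : ℝ, BddAbove { r | ∃ μ : Measure (Cfg d A), IsProbabilityMeasure μ ∧
      Invariant μ ∧ r = entropy μ + β * ∫ x, φ x ∂μ } := by
    intro β
    refine ⟨topEnt (Set.univ : Set (Cfg d A)) + |β| * B, ?_⟩
    rintro r ⟨μ, hp, hi, rfl⟩
    refine add_le_add (hent μ hp hi) ?_
    rw [hφi]
    have h1 : β * -(∫ x, gg X₀ x ∂μ) ≤ |β| * ∫ x, gg X₀ x ∂μ := by
      nlinarith [neg_abs_le β, hg0 μ]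
    exact h1.trans (mul_le_mul_of_nonneg_left (hgB μ hp) (abs_nonneg _))
  have hle : ∀ (β : ℝ) (μ : Measure (Cfg d A)), IsProbabilityMeasure μ → Invariant μ →
      entropy μ + β * ∫ x, φ x ∂μ ≤ pressure φ β := fun β μ hp hi =>
    le_csSup (hbdd β) ⟨μ, hp, hi, rfl⟩
  obtain ⟨m, hm⟩ := exists_mme hd X₀ hsub
  have hmme : ∀ μ, IsMME X₀ μ → ∫ x, φ x ∂μ = 0 := by
    intro μ hμ
    haveI := hμ.1
    rw [hφi, (supp_iff hd X₀ hsub μ).1 hμ.2.2.1, neg_zero]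
  -- the set S
  obtain ⟨S, hS⟩ : ∃ S : Set ℝ, S = {β | ∀ μ : Measure (Cfg d A), IsProbabilityMeasure μ →
    Invariant μ → entropy μ + β * ∫ x, φ x ∂μ ≤ h} := ⟨_, rfl⟩
  have h1S : (1 : ℝ) ∈ S := by
    rw [hS]; intro μ hp hi
    rw [hφi, hh]
    have := core hd X₀ hsub μ hi
    linarith
  have hup : ∀ β β' : ℝ, β ∈ S → β ≤ β' → β' ∈ S := by
    intro β β' hβ hl
    rw [hS] at *
    intro μ hp hi
    have h1 := hβ μ hp hi
    rw [hφi] at *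
    nlinarith [hg0 μ]
  obtain ⟨c, hc0, hcS⟩ : ∃ c : ℝ, 0 < c ∧ ∀ β ∈ S, c ≤ β := by
    obtain ⟨ν, hνp, hνi, -, hνe⟩ := exists_mme hd (Set.univ : Set (Cfg d A)) univ_sub
    have h1 : h < entropy ν := by
      rw [hνe, hh]
      exact (topEnt_lt X₀ hsub hproper).trans_le topEnt_univ
    have h2 : 0 < ∫ x, gg X₀ x ∂ν := by
      have := core hd X₀ hsub ν hνi
      rw [← hh] at this; linarith
    refine ⟨(entropy ν - h) / ∫ x, gg X₀ x ∂ν, div_pos (by linarith) h2, fun β hβ => ?_⟩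
    rw [hS] at hβ
    have h3 := hβ ν hνp hνi
    rw [hφi] at h3
    rw [div_le_iff₀ h2]; linarith
  have hSbdd : BddBelow S := ⟨c, fun β hβ => hcS β hβ⟩
  obtain ⟨βc, hβc⟩ : ∃ b, b = sInf S := ⟨_, rfl⟩
  have hβ0 : 0 < βc := by rw [hβc]; exact hc0.trans_le (le_csInf ⟨1, h1S⟩ hcS)
  have hβ1 : βc ≤ 1 := by rw [hβc]; exact csInf_le hSbdd h1S
  -- above
  have habove : ∀ β : ℝ, βc < β → ES φ β = { μ | IsMME X₀ μ } := by
    intro β hβ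
    obtain ⟨β', hβ'S, hβ'⟩ : ∃ β' ∈ S, β' < β := by
      rw [hβc] at hβ; exact exists_lt_of_csInf_lt ⟨1, h1S⟩ hβ
    have hpr : pressure φ β = h := by
      refine le_antisymm (csSup_le ⟨_, m, hm.1, hm.2.1, rfl⟩ ?_) ?_
      · rintro r ⟨μ, hp, hi, rfl⟩
        have := hup β' β hβ'S hβ'.le
        rw [hS] at this; exact this μ hp hi
      · have := hle β m hm.1 hm.2.1
        rw [hmme m hm, mul_zero, add_zero, hm.2.2.2] at this
        rw [hh]; exact this
    ext μ
    constructor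
    · rintro ⟨hp, hi, he⟩
      rw [hpr] at he
      have h1 := hβ'S
      rw [hS] at h1
      have h2 := h1 μ hp hi
      rw [hφi] at he h2
      have h3 : ∫ x, gg X₀ x ∂μ = 0 := by nlinarith [hg0 μ]
      refine ⟨hp, hi, (supp_iff hd X₀ hsub μ).2 h3, ?_⟩
      rw [h3] at he; rw [← hh]; linarith
    · intro hμ
      refine ⟨hμ.1, hμ.2.1, ?_⟩
      rw [hpr, hmme μ hμ, hμ.2.2.2, hh]; ring
  have hzta : ZTA φ = { μ | IsMME X₀ μ } := by
    ext μ
    constructor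
    · rintro ⟨hp, hi, β, μs, hβ, hμs, hconv⟩
      have hev : ∀ᶠ k in atTop, IsMME X₀ (μs k) := by
        filter_upwards [hβ.eventually_gt_atTop βc] with k hk
        have := hμs k
        rw [habove _ hk] at this; exact this
      have hsup : μ X₀ = 1 := by
        rw [supp_iff hd X₀ hsub]
        have h1 := hconv φ hφc
        have h2 : Tendsto (fun k => ∫ x, φ x ∂(μs k)) atTop (𝓝 0) :=
          tendsto_const_nhds.congr' (hev.mono fun k hk => (hmme _ hk).symm)
        have h3 := tendsto_nhds_unique h1 h2
        rw [hφi] at h3; linarith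
      refine ⟨hp, hi, hsup, le_antisymm ?_ ?_⟩
      · have h1 := core hd X₀ hsub μ hi
        rwa [(supp_iff hd X₀ hsub μ).1 hsup, add_zero] at h1
      · refine le_entropy μ _ fun n hn => ?_
        have h1 := HH_tendsto (F := atTop) (fun k => by
          haveI := (hμs k).1; infer_instance) hconv n
        refine ge_of_tendsto (h1.const_mul ((n : ℝ) ^ d)⁻¹) ?_
        filter_upwards [hev] with k hk
        haveI := hk.1
        rw [← hk.2.2.2]
        exact entropy_le (μs k) n hn
    · intro hμ
      refine ⟨hμ.1, hμ.2.1, fun k => (k : ℝ) + 2, fun _ => μ, ?_, fun k => ?_, fun f _ =>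
        tendsto_const_nhds⟩
      · exact tendsto_atTop_add_const_right _ _ tendsto_natCast_atTop_atTop
      · rw [habove _ (by have : (0 : ℝ) ≤ k := Nat.cast_nonneg k
                         linarith)]
        exact hμ
  have hbelow : ∀ β : ℝ, β < βc → ∀ μ ∈ ES φ β, μ X₀ = 0 := by
    intro β hβ μ ⟨hp, hi, he⟩
    have hnS : β ∉ S := fun hc => by
      rw [hβc] at hβ; exact absurd (csInf_le hSbdd hc) (not_le.2 hβ)
    have hph : h < pressure φ β := by
      rw [hS] at hnS
      simp only [Set.mem_setOf_eq, not_forall, not_le] at hnS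
      obtain ⟨ν, h1, h2, h3⟩ := hnS
      exact h3.trans_le (hle β ν h1 h2)
    by_contra hne
    have ha0 : 0 < μ.real X₀ := ENNReal.toReal_pos hne (measure_ne_top _ _)
    by_cases hb : μ X₀ᶜ = 0
    · have h1 : μ X₀ = 1 := (prob_compl_eq_zero_iff hsub.2.1.measurableSet).1 hb
      have h2 := (supp_iff hd X₀ hsub μ).1 h1
      have h3 := core hd X₀ hsub μ hi
      rw [hφi, h2] at he
      rw [h2] at h3
      linarith
    · haveI : IsProbabilityMeasure (ProbabilityTheory.cond μ X₀ᶜ) :=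
        ProbabilityTheory.cond_isProbabilityMeasure hb
      have h1 := entropy_split hd X₀ hsub μ hi hb
      have h2 := integral_split hd X₀ hsub μ hb
      have h3 := hle β _ this (cond_inv X₀ hsub μ hi)
      have h4 : μ.real X₀ᶜ = 1 - μ.real X₀ := probReal_compl_eq_one_sub hsub.2.1.measurableSet
      have hb0 : 0 < μ.real X₀ᶜ := ENNReal.toReal_pos hb (measure_ne_top _ _)
      rw [hφi] at he h3
      rw [h2] at he
      have h5 := mul_le_mul_of_nonneg_left h3 hb0.le
      have h6 := mul_lt_mul_of_pos_left hph ha0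
      rw [← hh] at h1
      have h7 : pressure φ β = μ.real X₀ * pressure φ β + μ.real X₀ᶜ * pressure φ β := by
        rw [h4]; ring
      linarith
  refine ⟨φ, βc, hφc, hβ0, hβ1, ⟨fun β β' h1 h2 => by rw [habove β h1, habove β' h2],
    fun β β' h1 h2 heq => ?_⟩, fun β hβ => ⟨habove β hβ, by rw [habove β hβ, hzta]⟩, hbelow⟩
  rw [habove β' h2] at heq
  have h3 : m ∈ ES φ β := by rw [heq]; exact hm
  have h4 := hbelow β h1 m h3
  rw [hm.2.2.1] at h4
  exact one_ne_zero h4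

end Freezing
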